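/- arXiv:2510.16839 — 4 statements merged into one kernel-verified Lean document; each statement's English description precedes it below -/
import Mathlib

section
/- Let W be a strongly connected aperiodic digraphon on a probability space (Ω,μ), let τ := ρ(W) > 0, and let w_L, w_R ∈ L²(Ω) be real left and right eigenfunctions for the eigenvalue τ with ⟨w_L, w_R⟩ = 1. Then there exist β ∈ (0,τ) and C > 0 such that for every ℓ ∈ ℕ and almost every (x,y) ∈ Ω²: |W^ℓ(x,y) − τ^ℓ w_R(x) w_L(y)| ≤ C·β^ℓ. -/
open MeasureTheory Filter Set Topology
open scoped ENNReal Real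

namespace Digraphon

variable {Ω : Type*} [MeasurableSpace Ω]

/-- `kpowAux μ Γ n` is the `(n+1)`-st kernel power of `Γ`. -/
noncomputable def kpowAux (μ : Measure Ω) (Γ : Ω → Ω → ℝ) : ℕ → Ω → Ω → ℝ
  | 0 => Γ
  | n + 1 => fun x y => ∫ z, Γ x z * kpowAux μ Γ n z y ∂μ

/-- `dpow μ Γ k` is the `k`-th kernel power of `Γ` (intended for `k ≥ 1`). -/
noncomputable def dpow (μ : Measure Ω) (Γ : Ω → Ω → ℝ) (k : ℕ) : Ω → Ω → ℝ :=
  kpowAux μ Γ (k - 1)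

noncomputable def kpowAuxC (μ : Measure Ω) (Γ : Ω → Ω → ℂ) : ℕ → Ω → Ω → ℂ
  | 0 => Γ
  | n + 1 => fun x y => ∫ z, Γ x z * kpowAuxC μ Γ n z y ∂μ

noncomputable def dpowC (μ : Measure Ω) (Γ : Ω → Ω → ℂ) (k : ℕ) : Ω → Ω → ℂ :=
  kpowAuxC μ Γ (k - 1)

/-- The set of points reachable from `x`. -/
def ReachOut (μ : Measure Ω) (Γ : Ω → Ω → ℝ) (x : Ω) : Set Ω :=
  {z | ∃ k : ℕ, 1 ≤ k ∧ 0 < dpow μ Γ k x z}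

/-- The reachability sequence from `x` to `y`. -/
def reachSeq (μ : Measure Ω) (Γ : Ω → Ω → ℝ) (x y : Ω) : Set ℕ :=
  {k : ℕ | 1 ≤ k ∧ 0 < dpow μ Γ k x y}

/-- A digraphon: a measurable kernel with values in `[0,1]`. -/
def IsDigraphon (Γ : Ω → Ω → ℝ) : Prop :=
  Measurable (Function.uncurry Γ) ∧ ∀ x y, Γ x y ∈ Set.Icc (0 : ℝ) 1

/-- `X` is strongly connected in `Γ`. -/
def StronglyConnectedIn (μ : Measure Ω) (Γ : Ω → Ω → ℝ) (X : Set Ω) : Prop :=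
  MeasurableSet X ∧ 0 < μ X ∧
    ∀ A B : Set Ω, MeasurableSet A → MeasurableSet B → A ∪ B = X → Disjoint A B →
      0 < μ A → 0 < μ B → 0 < ∫ x in A, ∫ y in B, Γ x y ∂μ ∂μ

/-- `X` is a strong component in `Γ`. -/
def StrongComponent (μ : Measure Ω) (Γ : Ω → Ω → ℝ) (X : Set Ω) : Prop :=
  StronglyConnectedIn μ Γ X ∧
    ∀ Y : Set Ω, MeasurableSet Y → 0 < μ (X ∩ Y) → 0 < μ (Y \ X) →
      ¬ StronglyConnectedIn μ Γ Y

/-- `X` is fragmented in `Γ`. -/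
def Fragmented (μ : Measure Ω) (Γ : Ω → Ω → ℝ) (X : Set Ω) : Prop :=
  ∀ Y : Set Ω, Y ⊆ X → MeasurableSet Y → ¬ StronglyConnectedIn μ Γ Y

/-- `τ` is an eigenvalue of the integral kernel operator of `Γ` on `L²(Ω;ℂ)`. -/
def IsEigenvalue (μ : Measure Ω) (Γ : Ω → Ω → ℝ) (τ : ℂ) : Prop :=
  ∃ f : Ω → ℂ, MemLp f 2 μ ∧ ¬(f =ᵐ[μ] 0) ∧
    ∀ᵐ x ∂μ, ∫ y, f y * (Γ y x : ℂ) ∂μ = τ * f x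

/-- The spectral radius of `Γ` (`0` if there are no eigenvalues). -/
noncomputable def specRad (μ : Measure Ω) (Γ : Ω → Ω → ℝ) : ℝ :=
  sSup (insert 0 {r : ℝ | ∃ τ : ℂ, IsEigenvalue μ Γ τ ∧ ‖τ‖ = r})

/-- The number of eigenvalues of modulus `specRad μ Γ`. -/
noncomputable def periphMult (μ : Measure Ω) (Γ : Ω → Ω → ℝ) : ℕ :=
  {τ : ℂ | IsEigenvalue μ Γ τ ∧ ‖τ‖ = specRad μ Γ}.ncard

/-- `P : ZMod d → Set Ω` witnesses graphical `d`-periodicity of `Γ`. -/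
def IsPeriodicityWitness (μ : Measure Ω) (Γ : Ω → Ω → ℝ) {d : ℕ} (P : ZMod d → Set Ω) : Prop :=
  (∀ j, MeasurableSet (P j)) ∧ Pairwise (Function.onFun Disjoint P) ∧ (⋃ j, P j) = Set.univ ∧
    ∀ j : ZMod d, (μ.prod μ) {p : Ω × Ω | p.1 ∈ P j ∧ p.2 ∉ P (j + 1) ∧ Γ p.1 p.2 ≠ 0} = 0

/-- `Γ` is graphically `d`-periodic. -/
def GraphPeriodic (μ : Measure Ω) (Γ : Ω → Ω → ℝ) (d : ℕ) : Prop :=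
  ∃ P : ZMod d → Set Ω, IsPeriodicityWitness μ Γ P

/-- `Γ` is aperiodic. -/
def Aperiodic (μ : Measure Ω) (Γ : Ω → Ω → ℝ) : Prop :=
  ∀ d : ℕ, 1 ≤ d → GraphPeriodic μ Γ d → d = 1

/-- `S ⊆ ℕ` is eventually `D`-periodic with shift `s`. -/
def EvPeriodic (D : ℕ) (s : ℤ) (S : Set ℕ) : Prop :=
  (∀ n ∈ S, (D : ℤ) ∣ ((n : ℤ) - s)) ∧
    ∃ k : ℕ, ∀ n : ℕ, k ≤ n → (((D : ℤ) ∣ ((n : ℤ) - s)) ↔ n ∈ S)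

/-- The homomorphism density `t(C_k, Γ)` of the directed `k`-cycle. -/
noncomputable def cycleDensity (μ : Measure Ω) (Γ : Ω → Ω → ℝ) (k : ℕ) : ℝ :=
  ∫ x : Fin k → Ω, ∏ i : Fin k, Γ (x i) (x (finRotate k i)) ∂(Measure.pi fun _ => μ)

/-- `Γ⟦A⟧` : the kernel equal to `Γ` on `A × A` and `0` elsewhere. -/
noncomputable def kerRestrict (Γ : Ω → Ω → ℝ) (A : Set Ω) : Ω → Ω → ℝ :=
  fun x y => (A ×ˢ A).indicator (Function.uncurry Γ) (x, y)

/-- Equality of sets modulo a `μ`-nullset. -/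
def AEEqSet (μ : Measure Ω) (A B : Set Ω) : Prop := μ ((A \ B) ∪ (B \ A)) = 0

/-- The normalized restriction of `μ` to `A`, as a measure on `↥A`. -/
noncomputable def subMeasure (μ : Measure Ω) (A : Set Ω) : Measure ↥A :=
  (μ A)⁻¹ • Measure.comap Subtype.val μ

/-- The restriction of a kernel to `A × A`, as a kernel on `↥A`. -/
def subKernel (Γ : Ω → Ω → ℝ) (A : Set Ω) : ↥A → ↥A → ℝ :=
  fun a b => Γ ↑a ↑b

/-- A finite oriented graph: no pair of antiparallel edges (in particular no loops). -/
structure OrientedGraph where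
  n : ℕ
  E : Finset (Fin n × Fin n)
  no_anti : ∀ e ∈ E, (e.2, e.1) ∉ E

/-- The homomorphism density `t(D, Γ)` of an oriented graph `D`. -/
noncomputable def homDensity (μ : Measure Ω) (Γ : Ω → Ω → ℝ) (D : OrientedGraph) : ℝ :=
  ∫ x : Fin D.n → Ω, ∏ e ∈ D.E, Γ (x e.1) (x e.2) ∂(Measure.pi fun _ => μ)

/-- The cut norm distance of two kernels. -/
noncomputable def cutNormDist (μ : Measure Ω) (U W : Ω → Ω → ℝ) : ℝ :=
  sSup {r : ℝ | ∃ S T : Set Ω, MeasurableSet S ∧ MeasurableSet T ∧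
    r = |∫ x in S, ∫ y in T, (U x y - W x y) ∂μ ∂μ|}

/-- The cut distance of two kernels. -/
noncomputable def cutDist (μ : Measure Ω) (U W : Ω → Ω → ℝ) : ℝ :=
  sInf {r : ℝ | ∃ e : Ω ≃ᵐ Ω, MeasurePreserving e μ μ ∧
    r = cutNormDist μ U (fun x y => W (e x) (e y))}


section
lemma abs_gelfand {E : Type*} [NormedAddCommGroup E] [NormedSpace ℂ E] [CompleteSpace E]
    (B : E →L[ℂ] E) (hB : IsCompactOperator B) (s : ℝ) (hs : 0 < s)
    (h : ∀ l : ℂ, ∀ f : E, f ≠ 0 → B f = l • f → ‖l‖ < s) :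
    ∃ b : ℝ, 0 < b ∧ b < s ∧ ∃ C : ℝ, 0 < C ∧ ∀ n : ℕ, ‖B ^ n‖ ≤ C * b ^ n := by
  rcases subsingleton_or_nontrivial E with hE | hE
  · refine ⟨s / 2, by linarith, by linarith, 1, one_pos, fun n => ?_⟩
    have : B ^ n = 0 := Subsingleton.elim _ _
    rw [this, norm_zero]; positivity
  have hsr : spectralRadius ℂ B < ENNReal.ofReal s := by
    refine spectrum.spectralRadius_lt_of_forall_lt (r := s.toNNReal) B ?_
    intro z hz
    rw [← NNReal.coe_lt_coe, Real.coe_toNNReal _ hs.le, coe_nnnorm]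
    by_cases hz0 : z = 0
    · simpa [hz0] using hs
    have := (hB.hasEigenvalue_iff_mem_spectrum hz0).2 hz
    obtain ⟨f, hf⟩ := this.exists_hasEigenvector
    exact h z f hf.2 hf.apply_eq_smul
  obtain ⟨c, hc1, hc2⟩ := exists_between hsr
  have hct : c ≠ ∞ := (hc2.trans ENNReal.ofReal_lt_top).ne
  have hcpos : 0 < c := pos_of_gt hc1
  set b := c.toReal with hb
  have hb0 : 0 < b := ENNReal.toReal_pos hcpos.ne' hct
  have hbs : b < s := by
    rw [hb, ← ENNReal.toReal_ofReal hs.le]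
    exact ENNReal.toReal_strict_mono ENNReal.ofReal_ne_top hc2
  refine ⟨b, hb0, hbs, ?_⟩
  have ht := spectrum.pow_nnnorm_pow_one_div_tendsto_nhds_spectralRadius B
  have hev := ht.eventually_lt_const hc1
  obtain ⟨N, hN⟩ := eventually_atTop.1 hev
  have hbig : ∀ n, N + 1 ≤ n → ‖B ^ n‖ ≤ b ^ n := by
    intro n hn
    have h1 := (hN n (by omega)).le
    have hn0 : (0 : ℝ) < n := by exact_mod_cast (by omega : 0 < n)
    have h2 := ENNReal.rpow_le_rpow h1 hn0.le
    rw [← ENNReal.rpow_mul, one_div_mul_cancel hn0.ne', ENNReal.rpow_one, ENNReal.rpow_natCast] at h2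
    have h3 := ENNReal.toReal_mono (ENNReal.pow_ne_top hct) h2
    simpa [ENNReal.toReal_pow] using h3
  refine ⟨1 + ∑ k ∈ Finset.range (N + 1), ‖B ^ k‖ / b ^ k, ?_, ?_⟩
  · have : 0 ≤ ∑ k ∈ Finset.range (N + 1), ‖B ^ k‖ / b ^ k := Finset.sum_nonneg fun _ _ => by positivity
    linarith
  intro n
  have h0 : 0 ≤ ∑ k ∈ Finset.range (N + 1), ‖B ^ k‖ / b ^ k := Finset.sum_nonneg fun _ _ => by positivity
  by_cases hn : N + 1 ≤ n
  · have := hbig n hn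
    nlinarith [pow_pos hb0 n]
  · have h1 : ‖B ^ n‖ / b ^ n ≤ ∑ k ∈ Finset.range (N + 1), ‖B ^ k‖ / b ^ k :=
      Finset.single_le_sum (f := fun k => ‖B ^ k‖ / b ^ k) (fun _ _ => by positivity)
        (Finset.mem_range.2 (by omega))
    rw [div_le_iff₀ (pow_pos hb0 n)] at h1
    nlinarith [pow_pos hb0 n]

/-- Krein–Rutman type lemma in an abstract cone. -/
lemma abs_kr {E : Type*} [NormedAddCommGroup E] [NormedSpace ℂ E] [CompleteSpace E]
    (S : E →L[ℂ] E) (hS : IsCompactOperator S) (N : Set E) (hNc : IsClosed N)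
    (hN0 : (0 : E) ∈ N)
    (hNadd : ∀ x ∈ N, ∀ y ∈ N, x + y ∈ N) (hNsmul : ∀ x ∈ N, ∀ c : ℝ, 0 ≤ c → (c : ℂ) • x ∈ N)
    (hNS : ∀ x ∈ N, S x ∈ N) (hNn : ∀ x ∈ N, ∀ y, y - x ∈ N → ‖x‖ ≤ ‖y‖)
    (t : ℝ) (ht : 0 < t) (u : E) (hu : u ∈ N) (hu0 : u ≠ 0) (huS : S u - (t : ℂ) • u ∈ N)
    (hb : ∀ b : ℝ, t < b → ∃ C : ℝ, ∀ n : ℕ, ‖S ^ n‖ ≤ C * b ^ n) :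
    ∃ r ∈ N, r ≠ 0 ∧ S r = (t : ℂ) • r := by
  have hpow : ∀ k : ℕ, (S ^ k) u - ((t ^ k : ℝ) : ℂ) • u ∈ N := by
    intro k
    induction k with
    | zero => simpa using hN0
    | succ k ih =>
      have e : (S ^ (k+1)) u - ((t ^ (k+1) : ℝ) : ℂ) • u
          = S ((S ^ k) u - ((t ^ k : ℝ) : ℂ) • u) + ((t ^ k : ℝ) : ℂ) • (S u - (t : ℂ) • u) := by
        rw [pow_succ' S, mul_apply_eq_comp, map_sub, map_smul, smul_sub, smul_smul]
        push_cast
        rw [pow_succ]; abel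
      rw [e]
      exact hNadd _ (hNS _ ih) _ (hNsmul _ huS _ (by positivity))
  have hNsum : ∀ (f : ℕ → E), (∀ k, f k ∈ N) → ∀ a, HasSum f a → a ∈ N := by
    intro f hf a ha
    refine hNc.mem_of_tendsto ha (Eventually.of_forall fun s => ?_)
    induction s using Finset.induction_on with
    | empty => simpa using hN0
    | insert i s hi ih => rw [Finset.sum_insert hi]; exact hNadd _ (hf _) _ ih
  -- resolvent
  have key : ∀ l : ℝ, t < l → ∃ v ∈ N, (l : ℂ) • v - S v = u ∧ ‖u‖ / (l - t) ≤ ‖v‖ := by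
    intro l hl
    have hl0 : 0 < l := ht.trans hl
    obtain ⟨b, hb1, hb2⟩ := exists_between hl
    obtain ⟨C, hC⟩ := hb b hb1
    have hb0 : 0 < b := ht.trans hb1
    set f : ℕ → E := fun k => (((l⁻¹) ^ (k+1) : ℝ) : ℂ) • (S ^ k) u with hf
    have hsf : Summable f := by
      refine Summable.of_norm_bounded (g := fun k => (l⁻¹ * C * ‖u‖) * (b / l) ^ k) ?_ ?_
      · refine Summable.mul_left _ (summable_geometric_of_lt_one (by positivity) ?_)
        rw [div_lt_one hl0]; exact hb2
      · intro k
        rw [hf]; simp only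
        rw [norm_smul, Complex.norm_real, Real.norm_of_nonneg (by positivity)]
        have := (S ^ k).le_of_opNorm_le (hC k) u
        calc _ ≤ l⁻¹ ^ (k+1) * (C * b ^ k * ‖u‖) := by gcongr
          _ = _ := by rw [div_pow, pow_succ, inv_pow]; field_simp
    have hfu : HasSum (fun k : ℕ => (((l⁻¹) ^ (k+1) * t ^ k : ℝ) : ℂ) • u) (((l - t)⁻¹ : ℝ) • u) := by
      have h1 : HasSum (fun k : ℕ => l⁻¹ * (t / l) ^ k) (l⁻¹ * (1 - t / l)⁻¹) :=
        (hasSum_geometric_of_lt_one (by positivity) (by rw [div_lt_one hl0]; exact hl)).mul_left _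
      have h2 : l⁻¹ * (1 - t / l)⁻¹ = (l - t)⁻¹ := by
        rw [← mul_inv]; congr 1; field_simp
      rw [h2] at h1
      have h3 := h1.smul_const u
      refine h3.congr_fun ?_ |> fun h => h
      intro k
      simp only [Complex.coe_smul]
      congr 1
      rw [div_pow, pow_succ, inv_pow]; field_simp
    refine ⟨∑' k, f k, hNsum f (fun k => ?_) _ hsf.hasSum, ?_, ?_⟩
    · refine hNsmul _ ?_ _ (by positivity)
      induction k with
      | zero => simpa using hu
      | succ k ih => rw [pow_succ', mul_apply_eq_comp]; exact hNS _ ih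
    · rw [S.map_tsum hsf, hsf.tsum_eq_zero_add, smul_add, ← tsum_const_smul'']
      have : ∀ k, (l : ℂ) • f (k+1) = S (f k) := by
        intro k
        rw [hf]; simp only
        rw [map_smul, smul_smul, pow_succ' S, mul_apply_eq_comp]
        congr 1
        rw [← Complex.ofReal_mul, pow_succ' _ (k+1), ← mul_assoc, mul_inv_cancel₀ hl0.ne', one_mul]
      simp_rw [this]
      rw [add_sub_cancel_right, hf]
      simp only [pow_zero, one_apply_eq_self, zero_add, pow_one]
      rw [smul_smul, ← Complex.ofReal_mul, mul_inv_cancel₀ hl0.ne']; simp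
    · have hd := hsf.hasSum.sub hfu
      have hm := hNsum _ (fun k => ?_) _ hd
      · have h1 := hNn (((l - t)⁻¹ : ℝ) • u) ?_ _ hm
        · rw [norm_smul, Real.norm_of_nonneg (by rw [inv_nonneg]; linarith)] at h1
          rw [div_eq_inv_mul]; exact h1
        · have := hNsmul u hu (l - t)⁻¹ (by rw [inv_nonneg]; linarith)
          rwa [Complex.coe_smul] at this
      · have := hNsmul _ (hpow k) (l⁻¹ ^ (k+1)) (by positivity)
        rw [smul_sub, smul_smul, ← Complex.ofReal_mul] at this
        exact this
  -- sequence
  have hlt : ∀ n : ℕ, t < t + 1 / ((n : ℝ) + 1) := fun n => by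
    have : 0 < 1 / ((n : ℝ) + 1) := by positivity
    linarith
  choose v hvN hvS hvn using fun n : ℕ => key (t + 1 / ((n : ℝ) + 1)) (hlt n)
  have hun : 0 < ‖u‖ := norm_pos_iff.2 hu0
  have hvn' : ∀ n : ℕ, ‖u‖ * ((n : ℝ) + 1) ≤ ‖v n‖ := by
    intro n
    have := hvn n
    rw [add_sub_cancel_left] at this
    simpa using this
  have hvpos : ∀ n, 0 < ‖v n‖ := fun n => lt_of_lt_of_le (by positivity) (hvn' n)
  set w : ℕ → E := fun n => ((‖v n‖⁻¹ : ℝ) : ℂ) • v n with hw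
  have hwn : ∀ n, ‖w n‖ = 1 := by
    intro n
    rw [hw]; simp only
    rw [norm_smul, Complex.norm_real, norm_inv, norm_norm, inv_mul_cancel₀ (hvpos n).ne']
  have hwN : ∀ n, w n ∈ N := fun n => hNsmul _ (hvN n) _ (by positivity)
  have hwS : ∀ n : ℕ, ((t + 1 / ((n : ℝ) + 1) : ℝ) : ℂ) • w n - S (w n) = ((‖v n‖⁻¹ : ℝ) : ℂ) • u := by
    intro n
    rw [← hvS n, hw]; simp only
    rw [map_smul, smul_sub, smul_comm]
  have hcomp := hS.isCompact_closure_image_closedBall (𝕜₁ := ℂ) (f := (S : E →ₗ[ℂ] E)) 1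
  obtain ⟨a, -, φ, hφ, ha⟩ := hcomp.tendsto_subseq (x := fun n => S (w n))
    (fun n => subset_closure ⟨w n, by simp [hwn n], rfl⟩)
  have hinv : Tendsto (fun n : ℕ => ((‖v n‖⁻¹ : ℝ) : ℂ) • u) atTop (𝓝 0) := by
    have h1 : Tendsto (fun n : ℕ => ‖v n‖) atTop atTop := by
      refine tendsto_atTop_mono hvn' ?_
      refine Tendsto.const_mul_atTop hun ?_
      exact tendsto_atTop_add_const_right _ _ tendsto_natCast_atTop_atTop
    have h2 := (tendsto_inv_atTop_zero.comp h1)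
    have h3 := (Complex.continuous_ofReal.tendsto 0).comp h2
    have h4 := h3.smul_const u
    simpa using h4
  have hlw : Tendsto (fun n => ((t + 1 / (((φ n : ℕ) : ℝ) + 1) : ℝ) : ℂ) • w (φ n)) atTop (𝓝 a) := by
    have := (hinv.comp hφ.tendsto_atTop).add ha
    rw [zero_add] at this
    refine this.congr fun n => ?_
    simp only [Function.comp]
    rw [← hwS]; abel
  have hlim : Tendsto (fun n : ℕ => ((((t + 1 / ((n : ℝ) + 1))⁻¹ : ℝ)) : ℂ)) atTop (𝓝 ((t⁻¹ : ℝ) : ℂ)) := by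
    refine (Complex.continuous_ofReal.tendsto _).comp ?_
    refine Tendsto.inv₀ ?_ ht.ne'
    simpa using tendsto_one_div_add_atTop_nhds_zero_nat.const_add t
  have hwl : Tendsto (fun n => w (φ n)) atTop (𝓝 (((t⁻¹ : ℝ) : ℂ) • a)) := by
    refine ((hlim.comp hφ.tendsto_atTop).smul hlw).congr fun n => ?_
    simp only [Function.comp]
    have : t + 1 / (((φ n : ℕ) : ℝ) + 1) ≠ 0 := (ht.trans (hlt _)).ne'
    rw [smul_smul, ← Complex.ofReal_mul, inv_mul_cancel₀ this]; simp
  set r := ((t⁻¹ : ℝ) : ℂ) • a with hr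
  have hSr : S r = a := tendsto_nhds_unique ((S.continuous.tendsto r).comp hwl) ha
  refine ⟨r, hNc.mem_of_tendsto hwl (Eventually.of_forall fun n => hwN _), ?_, ?_⟩
  · have := hwl.norm
    simp only [hwn] at this
    have := tendsto_nhds_unique this tendsto_const_nhds
    intro h0; rw [h0] at this; simp at this
  · rw [hSr, hr, smul_smul, ← Complex.ofReal_mul, mul_inv_cancel₀ ht.ne']; simp

end

section
/-- bounded measurable complex kernel -/
def KB (F : Ω × Ω → ℂ) : Prop := Measurable F ∧ ∃ M : ℝ, ∀ p, ‖F p‖ ≤ M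

lemma KB.add {F G : Ω × Ω → ℂ} (hF : KB F) (hG : KB G) : KB (F + G) := by
  obtain ⟨h1, M, hM⟩ := hF
  obtain ⟨h2, M', hM'⟩ := hG
  exact ⟨h1.add h2, M + M', fun p => (norm_add_le _ _).trans (add_le_add (hM p) (hM' p))⟩

lemma KB.sub {F G : Ω × Ω → ℂ} (hF : KB F) (hG : KB G) : KB (F - G) := by
  obtain ⟨h1, M, hM⟩ := hF
  obtain ⟨h2, M', hM'⟩ := hG
  exact ⟨h1.sub h2, M + M', fun p => (norm_sub_le _ _).trans (add_le_add (hM p) (hM' p))⟩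

variable (μ : Measure Ω) [IsProbabilityMeasure μ]

lemma KB.memLp {F : Ω × Ω → ℂ} (hF : KB F) : MemLp F 2 (μ.prod μ) := by
  obtain ⟨h1, M, hM⟩ := hF
  exact MemLp.of_bound h1.aestronglyMeasurable M (Eventually.of_forall hM)

lemma KB.integrable_mul {F : Ω × Ω → ℂ} (hF : KB F) {f : Ω → ℂ} (hf : MemLp f 2 μ) (x : Ω) :
    Integrable (fun y => F (x, y) * f y) μ := by
  obtain ⟨h1, M, hM⟩ := hF
  exact (hf.integrable (by norm_num)).bdd_mul
    (h1.comp measurable_prodMk_left).aestronglyMeasurable (Eventually.of_forall fun y => hM _)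

/-- application of a kernel -/
noncomputable def kapp (F : Ω × Ω → ℂ) (f : Ω → ℂ) (x : Ω) : ℂ := ∫ y, F (x, y) * f y ∂μ

lemma kapp_aesm {F : Ω × Ω → ℂ} (hF : Measurable F) {f : Ω → ℂ} (hf : AEStronglyMeasurable f μ) :
    AEStronglyMeasurable (kapp μ F f) μ := by
  have : AEStronglyMeasurable (fun p : Ω × Ω => F p * f p.2) (μ.prod μ) :=
    hF.aestronglyMeasurable.mul hf.comp_snd
  exact this.integral_prod_right'

lemma kapp_bound {F : Ω × Ω → ℂ} (hF : Measurable F) {f : Ω → ℂ} (hf : AEStronglyMeasurable f μ) :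
    eLpNorm (kapp μ F f) 2 μ ≤ eLpNorm F 2 (μ.prod μ) * eLpNorm f 2 μ := by
  rw [eLpNorm_eq_lintegral_rpow_enorm_toReal (by norm_num) (by norm_num),
    eLpNorm_eq_lintegral_rpow_enorm_toReal (by norm_num) (by norm_num),
    eLpNorm_eq_lintegral_rpow_enorm_toReal (by norm_num) (by norm_num)]
  have h2 : (2 : ℝ≥0∞).toReal = 2 := by norm_num
  rw [h2, ← ENNReal.mul_rpow_of_nonneg _ _ (by norm_num)]
  refine ENNReal.rpow_le_rpow ?_ (by norm_num)
  rw [lintegral_prod _ (hF.enorm.pow_const _).aemeasurable, ← lintegral_mul_const]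
  swap
  · exact (hF.enorm.pow_const _).lintegral_prod_right'
  refine lintegral_mono fun x => ?_
  have hm : Measurable fun y => F (x, y) := hF.comp measurable_prodMk_left
  have h1 : ‖kapp μ F f x‖ₑ ≤ (∫⁻ y, ‖F (x, y)‖ₑ ^ (2 : ℝ) ∂μ) ^ (1 / (2 : ℝ)) * (∫⁻ y, ‖f y‖ₑ ^ (2 : ℝ) ∂μ) ^ (1 / (2 : ℝ)) := by
    refine (enorm_integral_le_lintegral_enorm _).trans ?_
    simp_rw [enorm_mul]
    exact ENNReal.lintegral_mul_le_Lp_mul_Lq μ Real.HolderConjugate.two_two hm.enorm.aemeasurable hf.enorm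
  have h3 := ENNReal.rpow_le_rpow h1 (z := 2) (by norm_num)
  refine h3.trans (le_of_eq ?_)
  rw [ENNReal.mul_rpow_of_nonneg _ _ (by norm_num), ← ENNReal.rpow_mul, ← ENNReal.rpow_mul]
  norm_num

lemma kapp_memLp {F : Ω × Ω → ℂ} (hF : KB F) {f : Ω → ℂ} (hf : MemLp f 2 μ) :
    MemLp (kapp μ F f) 2 μ :=
  ⟨kapp_aesm μ hF.1 hf.1, (kapp_bound μ hF.1 hf.1).trans_lt
    (ENNReal.mul_lt_top (hF.memLp μ).2 hf.2)⟩

lemma kapp_congr (F : Ω × Ω → ℂ) {f g : Ω → ℂ} (h : f =ᵐ[μ] g) (x : Ω) : kapp μ F f x = kapp μ F g x := by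
  refine integral_congr_ae ?_
  filter_upwards [h] with y hy
  rw [hy]

/-- kernel operator -/
noncomputable def Op (F : Ω × Ω → ℂ) (hF : KB F) : Lp ℂ 2 μ →L[ℂ] Lp ℂ 2 μ :=
  LinearMap.mkContinuous
    { toFun := fun f => (kapp_memLp μ hF (Lp.memLp f)).toLp
      map_add' := by
        intro f g
        rw [← MemLp.toLp_add]
        refine MemLp.toLp_congr _ _ (Eventually.of_forall fun x => ?_)
        rw [kapp_congr μ F (Lp.coeFn_add f g)]
        simp only [kapp, Pi.add_apply, mul_add]
        exact integral_add (hF.integrable_mul μ (Lp.memLp f) x) (hF.integrable_mul μ (Lp.memLp g) x)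
      map_smul' := by
        intro c f
        simp only [RingHom.id_apply]
        rw [← MemLp.toLp_const_smul]
        refine MemLp.toLp_congr _ _ (Eventually.of_forall fun x => ?_)
        rw [kapp_congr μ F (Lp.coeFn_smul c f)]
        simp only [kapp, Pi.smul_apply, smul_eq_mul]
        rw [← integral_const_mul]
        congr 1; ext y; ring }
    (eLpNorm F 2 (μ.prod μ)).toReal (by
      intro f
      simp only [LinearMap.coe_mk, AddHom.coe_mk]
      rw [Lp.norm_toLp, Lp.norm_def, ← ENNReal.toReal_mul]
      exact ENNReal.toReal_mono (ENNReal.mul_lt_top (hF.memLp μ).2 (Lp.memLp f).2).ne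
        (kapp_bound μ hF.1 (Lp.memLp f).1))

lemma Op_apply {F : Ω × Ω → ℂ} (hF : KB F) (f : Lp ℂ 2 μ) : Op μ F hF f =ᵐ[μ] kapp μ F f :=
  MemLp.coeFn_toLp (kapp_memLp μ hF (Lp.memLp f))

lemma Op_toLp {F : Ω × Ω → ℂ} (hF : KB F) {f : Ω → ℂ} (hf : MemLp f 2 μ) :
    Op μ F hF (hf.toLp) = (kapp_memLp μ hF hf).toLp := by
  refine Lp.ext ?_
  filter_upwards [Op_apply μ hF hf.toLp, MemLp.coeFn_toLp (kapp_memLp μ hF hf)] with x h1 h2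
  rw [h1, h2]
  exact kapp_congr μ F hf.coeFn_toLp x

lemma Op_norm {F : Ω × Ω → ℂ} (hF : KB F) : ‖Op μ F hF‖ ≤ (eLpNorm F 2 (μ.prod μ)).toReal :=
  LinearMap.mkContinuous_norm_le _ ENNReal.toReal_nonneg _

lemma Op_add {F G : Ω × Ω → ℂ} (hF : KB F) (hG : KB G) :
    Op μ (F + G) (hF.add hG) = Op μ F hF + Op μ G hG := by
  ext1 f
  refine Lp.ext ?_
  filter_upwards [Op_apply μ hF f, Op_apply μ hG f, Op_apply μ (hF.add hG) f,
    Lp.coeFn_add (Op μ F hF f) (Op μ G hG f)] with x h1 h2 h3 h4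
  rw [add_apply, h4, Pi.add_apply, h1, h2, h3]
  simp only [kapp, Pi.add_apply, add_mul]
  exact integral_add (hF.integrable_mul μ (Lp.memLp f) x) (hG.integrable_mul μ (Lp.memLp f) x)

lemma Op_sub {F G : Ω × Ω → ℂ} (hF : KB F) (hG : KB G) :
    Op μ (F - G) (hF.sub hG) = Op μ F hF - Op μ G hG := by
  ext1 f
  refine Lp.ext ?_
  filter_upwards [Op_apply μ hF f, Op_apply μ hG f, Op_apply μ (hF.sub hG) f,
    Lp.coeFn_sub (Op μ F hF f) (Op μ G hG f)] with x h1 h2 h3 h4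
  rw [sub_apply, h4, Pi.sub_apply, h1, h2, h3]
  simp only [kapp, Pi.sub_apply, sub_mul]
  exact integral_sub (hF.integrable_mul μ (Lp.memLp f) x) (hG.integrable_mul μ (Lp.memLp f) x)

/-- kernels with compact operator -/
def KC (F : Ω × Ω → ℂ) : Prop := ∃ h : KB F, IsCompactOperator (Op μ F h)

lemma KC.add {F G : Ω × Ω → ℂ} (hF : KC μ F) (hG : KC μ G) : KC μ (F + G) := by
  obtain ⟨h1, h2⟩ := hF
  obtain ⟨h3, h4⟩ := hG
  refine ⟨h1.add h3, ?_⟩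
  rw [Op_add μ h1 h3]
  exact h2.add h4

lemma KC.sub {F G : Ω × Ω → ℂ} (hF : KC μ F) (hG : KC μ G) : KC μ (F - G) := by
  obtain ⟨h1, h2⟩ := hF
  obtain ⟨h3, h4⟩ := hG
  refine ⟨h1.sub h3, ?_⟩
  rw [Op_sub μ h1 h3]
  exact h2.sub h4

lemma compact_rankone {E : Type*} [NormedAddCommGroup E] [NormedSpace ℂ E]
    (l : E →L[ℂ] ℂ) (v : E) : IsCompactOperator ((ContinuousLinearMap.toSpanSingleton ℂ v).comp l) := by
  have h : IsCompactOperator (ContinuousLinearMap.toSpanSingleton ℂ v) :=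
    isCompactOperator_of_locallyCompactSpace_rng _
  exact h.comp_clm l

lemma KC_rect (c : ℂ) {A B : Set Ω} (hA : MeasurableSet A) (hB : MeasurableSet B) :
    KC μ ((A ×ˢ B).indicator fun _ => c) := by
  have hK : KB ((A ×ˢ B).indicator fun _ => c) := by
    refine ⟨measurable_const.indicator (hA.prod hB), ‖c‖, fun p => ?_⟩
    exact norm_indicator_le_norm_self (fun _ => c) p
  refine ⟨hK, ?_⟩
  have : Op μ _ hK = (ContinuousLinearMap.toSpanSingleton ℂ (indicatorConstLp 2 hA (measure_ne_top μ A) c)).comp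
      (innerSL ℂ (indicatorConstLp 2 hB (measure_ne_top μ B) (1 : ℂ))) := by
    ext1 f
    refine Lp.ext ?_
    rw [ContinuousLinearMap.comp_apply, innerSL_apply_apply, L2.inner_indicatorConstLp_one,
      ContinuousLinearMap.toSpanSingleton_apply]
    filter_upwards [Op_apply μ hK f, Lp.coeFn_smul (∫ x in B, f x ∂μ) (indicatorConstLp 2 hA (measure_ne_top μ A) c),
      indicatorConstLp_coeFn (p := 2) (hs := hA) (hμs := measure_ne_top μ A) (c := c)] with x h1 h2 h3
    rw [h1, h2, Pi.smul_apply, h3, kapp, smul_eq_mul]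
    by_cases hx : x ∈ A
    · rw [indicator_of_mem hx, mul_comm, ← integral_const_mul, ← integral_indicator hB]
      congr 1; ext y
      by_cases hy : y ∈ B <;> simp [hx, hy]
    · simp [hx]
  rw [this]
  exact compact_rankone _ _

lemma KC_dense_ind (c : ℂ) {s : Set (Ω × Ω)} (hs : MeasurableSet s) :
    ∀ ε : ℝ≥0∞, ε ≠ 0 → ∃ g : Ω × Ω → ℂ,
      eLpNorm (g - s.indicator fun _ => c) 2 (μ.prod μ) ≤ ε ∧ KC μ g := by
  have hind : ∀ t : Set (Ω × Ω), MeasurableSet t → AEStronglyMeasurable (t.indicator fun _ => c) (μ.prod μ) :=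
    fun t ht => (measurable_const.indicator ht).aestronglyMeasurable
  have hKCm : ∀ g, KC μ g → AEStronglyMeasurable g (μ.prod μ) := fun g hg => hg.1.1.aestronglyMeasurable
  induction s, hs using MeasurableSpace.induction_on_inter generateFrom_prod.symm isPiSystem_prod with
  | empty =>
    intro ε hε
    refine ⟨(∅ ×ˢ ∅ : Set (Ω × Ω)).indicator fun _ => c, by simp, KC_rect μ c .empty .empty⟩
  | basic t ht =>
    intro ε hε
    obtain ⟨A, hA, B, hB, rfl⟩ := ht
    exact ⟨_, by simp, KC_rect μ c hA hB⟩
  | compl t ht ih =>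
    intro ε hε
    obtain ⟨g, hg1, hg2⟩ := ih ε hε
    refine ⟨((univ ×ˢ univ : Set (Ω × Ω)).indicator fun _ => c) - g, ?_, (KC_rect μ c .univ .univ).sub μ hg2⟩
    rw [← eLpNorm_neg]
    convert hg1 using 2
    ext p
    by_cases hp : p ∈ t <;> simp [hp]
  | iUnion f hd hfm ih =>
    intro ε hε
    -- finite unions
    have hfin : ∀ n : ℕ, ∀ ε : ℝ≥0∞, ε ≠ 0 → ∃ g : Ω × Ω → ℂ,
        eLpNorm (g - (⋃ i ∈ Finset.range n, f i).indicator fun _ => c) 2 (μ.prod μ) ≤ ε ∧ KC μ g := by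
      intro n
      induction n with
      | zero =>
        intro ε hε
        refine ⟨(∅ ×ˢ ∅ : Set (Ω × Ω)).indicator fun _ => c, by simp, KC_rect μ c .empty .empty⟩
      | succ n ihn =>
        intro ε hε
        obtain ⟨η, hη, hh⟩ := exists_Lp_half ℂ (μ.prod μ) 2 hε
        obtain ⟨g1, h1, h1'⟩ := ihn η hη.ne'
        obtain ⟨g2, h2, h2'⟩ := ih n η hη.ne'
        refine ⟨g1 + g2, ?_, h1'.add μ h2'⟩
        have := hh _ _ ((hKCm _ h1').sub (hind _ (Finset.measurableSet_biUnion _ fun i _ => hfm i)))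
          ((hKCm _ h2').sub (hind _ (hfm n))) h1 h2
        refine le_trans (le_of_eq ?_) this.le
        congr 1
        have hdis : Disjoint (⋃ i ∈ Finset.range n, f i) (f n) := by
          rw [Set.disjoint_iUnion₂_left]
          intro i hi
          exact hd (by have := Finset.mem_range.1 hi; omega)
        rw [Finset.range_add_one, Finset.set_biUnion_insert, Set.union_comm, Set.indicator_union_of_disjoint hdis]
        ext p; simp; ring
    obtain ⟨η, hη, hh⟩ := exists_Lp_half ℂ (μ.prod μ) 2 hε
    have htail : Tendsto (fun n : ℕ => eLpNorm (((⋃ i, f i) \ (⋃ i ∈ Finset.range n, f i)).indicator fun _ => c) 2 (μ.prod μ))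
        atTop (𝓝 0) := by
      have hmeas : ∀ n : ℕ, MeasurableSet ((⋃ i, f i) \ (⋃ i ∈ Finset.range n, f i)) := fun n =>
        (MeasurableSet.iUnion hfm).diff (Finset.measurableSet_biUnion _ fun i _ => hfm i)
      have e : ∀ n : ℕ, eLpNorm (((⋃ i, f i) \ (⋃ i ∈ Finset.range n, f i)).indicator fun _ => c) 2 (μ.prod μ)
        = ‖c‖ₑ * (μ.prod μ) ((⋃ i, f i) \ (⋃ i ∈ Finset.range n, f i)) ^ (1 / (2 : ℝ≥0∞).toReal) :=
        fun n => eLpNorm_indicator_const (hmeas n) (by norm_num) (by norm_num)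
      simp_rw [e]
      have h0 : Tendsto (fun n : ℕ => (μ.prod μ) ((⋃ i, f i) \ (⋃ i ∈ Finset.range n, f i))) atTop (𝓝 0) := by
        have := tendsto_measure_iInter_atTop (μ := μ.prod μ)
          (s := fun n : ℕ => (⋃ i, f i) \ (⋃ i ∈ Finset.range n, f i)) (fun n => (hmeas n).nullMeasurableSet)
          (by
            intro m n hmn
            refine sdiff_subset_sdiff_right ?_
            exact biUnion_subset_biUnion_left (by simpa using hmn)) ⟨0, measure_ne_top _ _⟩
        have hemp : (⋂ n : ℕ, (⋃ i, f i) \ (⋃ i ∈ Finset.range n, f i)) = ∅ := by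
          ext p
          simp only [mem_iInter, Set.mem_sdiff, mem_iUnion, mem_empty_iff_false, iff_false, Finset.mem_range]
          intro h
          obtain ⟨i, hi⟩ := (h 0).1
          exact (h (i+1)).2 ⟨i, by omega, hi⟩
        rwa [hemp, measure_empty] at this
      have h1 := ENNReal.Tendsto.const_mul (a := ‖c‖ₑ) ((ENNReal.continuous_rpow_const (y := 1 / (2 : ℝ≥0∞).toReal)).tendsto 0 |>.comp h0)
        (Or.inr enorm_ne_top)
      simpa using h1
    obtain ⟨n, hn⟩ := (htail.eventually_lt_const hη).exists
    obtain ⟨g, hg1, hg2⟩ := hfin n η hη.ne'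
    refine ⟨g, ?_, hg2⟩
    rw [← eLpNorm_neg] at hn
    have hm1 : MeasurableSet (⋃ i ∈ Finset.range n, f i) := Finset.measurableSet_biUnion _ fun i _ => hfm i
    have := hh _ _ ((hKCm _ hg2).sub (hind _ hm1))
      (hind _ ((MeasurableSet.iUnion hfm).diff hm1)).neg hg1 hn.le
    refine le_trans (le_of_eq ?_) this.le
    congr 1
    ext p
    have hsub : (⋃ i ∈ Finset.range n, f i) ⊆ ⋃ i, f i := iUnion₂_subset fun i _ => subset_iUnion f i
    by_cases hp : p ∈ ⋃ i ∈ Finset.range n, f i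
    · have hp' := hsub hp
      simp only [Pi.sub_apply, Pi.add_apply, Pi.neg_apply]
      rw [indicator_of_mem hp, indicator_of_mem hp', indicator_of_notMem (fun h => h.2 hp)]; ring
    · simp only [Pi.sub_apply, Pi.add_apply, Pi.neg_apply]
      rw [indicator_of_notMem hp]
      by_cases hp' : p ∈ ⋃ i, f i
      · rw [indicator_of_mem hp', indicator_of_mem ((Set.mem_sdiff p).2 ⟨hp', hp⟩)]; ring
      · rw [indicator_of_notMem hp', indicator_of_notMem (fun h => hp' h.1)]; ring

lemma Op_compact {F : Ω × Ω → ℂ} (hF : KB F) : IsCompactOperator (Op μ F hF) := by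
  have hd : ∀ ε : ℝ≥0∞, ε ≠ 0 → ∃ g, eLpNorm (F - g) 2 (μ.prod μ) ≤ ε ∧ KC μ g := fun ε hε =>
    MemLp.induction_dense (p := 2) (by norm_num) (KC μ) (fun c s hs _ {ε} hε => KC_dense_ind μ c hs ε hε)
      (fun f g hf hg => hf.add μ hg) (fun f hf => hf.1.1.aestronglyMeasurable) (hF.memLp μ) hε
  choose g hg1 hg2 using fun n : ℕ => hd (ENNReal.ofReal (1 / ((n : ℝ) + 1))) (by
    rw [Ne, ENNReal.ofReal_eq_zero, not_le]; positivity)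
  refine isCompactOperator_of_tendsto (l := atTop) (F := fun n => Op μ (g n) (hg2 n).1) ?_
    (Eventually.of_forall fun n => (hg2 n).2)
  rw [tendsto_iff_norm_sub_tendsto_zero]
  refine squeeze_zero (fun _ => norm_nonneg _) (fun n => ?_) tendsto_one_div_add_atTop_nhds_zero_nat
  rw [norm_sub_rev, ← Op_sub]
  refine (Op_norm μ _).trans ?_
  exact ENNReal.toReal_le_of_le_ofReal (by positivity) (hg1 n)

end

section
lemma IsDigraphon.transpose {K : Ω → Ω → ℝ} (hK : IsDigraphon K) : IsDigraphon (fun x y => K y x) :=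
  ⟨hK.1.comp measurable_swap, fun x y => hK.2 y x⟩

lemma IsDigraphon.norm_le {K : Ω → Ω → ℝ} (hK : IsDigraphon K) (x y : Ω) : ‖K x y‖ ≤ 1 := by
  rw [Real.norm_of_nonneg (hK.2 x y).1]; exact (hK.2 x y).2

lemma IsDigraphon.meas {K : Ω → Ω → ℝ} (hK : IsDigraphon K) (x : Ω) : Measurable (K x) :=
  hK.1.comp measurable_prodMk_left

/-- complexified kernel -/
def ck (K : Ω → Ω → ℝ) : Ω × Ω → ℂ := fun p => (K p.1 p.2 : ℂ)

lemma IsDigraphon.kb {K : Ω → Ω → ℝ} (hK : IsDigraphon K) : KB (ck K) := by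
  refine ⟨Complex.measurable_ofReal.comp hK.1, 1, fun p => ?_⟩
  rw [ck, Complex.norm_real]; exact hK.norm_le _ _

variable (μ : Measure Ω) [IsProbabilityMeasure μ]

/-- irreducible -/
def Irr (K : Ω → Ω → ℝ) : Prop := ∀ A : Set Ω, MeasurableSet A →
  (∀ᵐ p ∂(μ.prod μ), p.1 ∈ A → p.2 ∉ A → K p.1 p.2 = 0) → μ A = 0 ∨ μ Aᶜ = 0

lemma irr_of_conn {K : Ω → Ω → ℝ} (hc : StronglyConnectedIn μ K univ) : Irr μ K := by
  intro A hA h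
  by_contra! hcon
  have h1 := hc.2.2 A Aᶜ hA hA.compl (by simp) disjoint_compl_right
    (pos_iff_ne_zero.2 hcon.1) (pos_iff_ne_zero.2 hcon.2)
  have h2 : ∫ x in A, ∫ y in Aᶜ, K x y ∂μ ∂μ = 0 := by
    refine integral_eq_zero_of_ae ?_
    rw [EventuallyEq, ae_restrict_iff' hA]
    filter_upwards [Measure.ae_ae_of_ae_prod h] with x hx hxA
    refine integral_eq_zero_of_ae ?_
    rw [EventuallyEq, ae_restrict_iff' hA.compl]
    filter_upwards [hx] with y hy hyA
    exact hy hxA hyA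
  exact h1.ne' h2

lemma ae_swap {p : Ω × Ω → Prop} (h : ∀ᵐ z ∂(μ.prod μ), p z) : ∀ᵐ z ∂(μ.prod μ), p z.swap :=
  (Measure.measurePreserving_swap (μ := μ) (ν := μ)).quasiMeasurePreserving.ae h

lemma Irr.transpose {K : Ω → Ω → ℝ} (hK : Irr μ K) : Irr μ (fun x y => K y x) := by
  intro A hA h
  have h' := ae_swap μ h
  have := hK Aᶜ hA.compl (by
    filter_upwards [h'] with p hp h1 h2
    exact hp (by simpa using h2) h1)
  rw [compl_compl] at this
  exact this.symm

lemma int_mul {K : Ω → Ω → ℝ} (hK : IsDigraphon K) {h : Ω → ℝ} (hh : MemLp h 2 μ) (x : Ω) :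
    Integrable (fun y => K x y * h y) μ :=
  (hh.integrable (by norm_num)).bdd_mul (c := 1) (hK.meas x).aestronglyMeasurable
    (Eventually.of_forall fun y => hK.norm_le x y)

lemma pos_of_irr {K : Ω → Ω → ℝ} (hK : IsDigraphon K) (hI : Irr μ K) (t : ℝ) {h : Ω → ℝ}
    (hh : MemLp h 2 μ) (h0 : ∀ᵐ x ∂μ, 0 ≤ h x) (hne : ¬ (h =ᵐ[μ] 0))
    (he : ∀ᵐ x ∂μ, ∫ y, K x y * h y ∂μ = t * h x) : ∀ᵐ x ∂μ, 0 < h x := by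
  obtain ⟨g, hg, hhg⟩ := hh.1.aemeasurable
  set A : Set Ω := {x | g x = 0} with hAdef
  have hA : MeasurableSet A := hg (measurableSet_singleton 0)
  have hset : MeasurableSet {p : Ω × Ω | p.1 ∈ A → p.2 ∉ A → K p.1 p.2 = 0} := by
    have : {p : Ω × Ω | p.1 ∈ A → p.2 ∉ A → K p.1 p.2 = 0} =
      (Prod.fst ⁻¹' A)ᶜ ∪ (Prod.snd ⁻¹' A) ∪ {p | Function.uncurry K p = 0} := by
      ext p; simp [Function.uncurry]; tauto
    rw [this]
    exact ((measurable_fst hA).compl.union (measurable_snd hA)).union (hK.1 (measurableSet_singleton 0))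
  have h1 : ∀ᵐ p ∂(μ.prod μ), p.1 ∈ A → p.2 ∉ A → K p.1 p.2 = 0 := by
    rw [Measure.ae_prod_iff_ae_ae hset]
    filter_upwards [he, hhg] with x hx hxg
    by_cases hxA : x ∈ A
    swap
    · exact Eventually.of_forall fun y h => absurd h hxA
    have hxA' : g x = 0 := hxA
    rw [hxg, hxA', mul_zero] at hx
    rw [integral_eq_zero_iff_of_nonneg_ae ?_ (int_mul μ hK hh x)] at hx
    · filter_upwards [hx, hhg] with y hy hyg _ hyA
      simp only [Pi.zero_apply] at hy
      rcases mul_eq_zero.1 hy with h | h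
      · exact h
      · exact absurd (by rw [hAdef, mem_ofPred_eq, ← hyg, h]) hyA
    · filter_upwards [h0] with y hy
      exact mul_nonneg (hK.2 x y).1 hy
  rcases hI A hA h1 with h2 | h2
  · filter_upwards [measure_eq_zero_iff_ae_notMem.1 h2, h0, hhg] with x hx hx0 hxg
    refine lt_of_le_of_ne hx0 fun h => hx ?_
    rw [hAdef, mem_ofPred_eq, ← hxg, ← h]
  · exfalso
    apply hne
    filter_upwards [measure_eq_zero_iff_ae_notMem.1 h2, hhg] with x hx hxg
    rw [hxg]
    simpa [hAdef] using hx

lemma const_of_irr {K : Ω → Ω → ℝ} (hI : Irr μ K) {φ : Ω → ℂ} (hφ : Measurable φ)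
    (h : ∀ᵐ p ∂(μ.prod μ), K p.1 p.2 ≠ 0 → φ p.2 = φ p.1) : ∃ c, φ =ᵐ[μ] fun _ => c := by
  have := exists_eventuallyEq_const_of_forall_separating (l := ae μ) (f := φ) MeasurableSet ?_
  · exact this
  intro U hU
  have h1 := hI (φ ⁻¹' U) (hφ hU) (by
    filter_upwards [h] with p hp h1 h2
    by_contra h3
    apply h2
    rw [mem_preimage, hp h3]; exact h1)
  rcases h1 with h1 | h1
  · right; exact measure_eq_zero_iff_ae_notMem.1 h1
  · left
    filter_upwards [measure_eq_zero_iff_ae_notMem.1 h1] with x hx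
    simpa using hx

lemma fub {𝕜 : Type*} [RCLike 𝕜] (K : Ω → Ω → 𝕜) (hK : Measurable (Function.uncurry K))
    (hb : ∀ x y, ‖K x y‖ ≤ 1) {f g : Ω → 𝕜} (hf : Integrable f μ) (hg : Integrable g μ) :
    ∫ x, g x * ∫ y, K x y * f y ∂μ ∂μ = ∫ y, (∫ x, K x y * g x ∂μ) * f y ∂μ := by
  have hi : Integrable (Function.uncurry fun x y => K x y * (g x * f y)) (μ.prod μ) := by
    have := (hg.mul_prod hf).bdd_mul (c := 1) hK.aestronglyMeasurable (Eventually.of_forall fun p => hb p.1 p.2)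
    exact this
  have := integral_integral_swap hi
  calc _ = ∫ x, ∫ y, K x y * (g x * f y) ∂μ ∂μ := by
        congr 1; ext x; rw [← integral_const_mul]; congr 1; ext y; ring
    _ = _ := this
    _ = _ := by
        congr 1; ext y; rw [← integral_mul_const]; congr 1; ext x; ring

lemma aper {K : Ω → Ω → ℝ} (hI : Irr μ K) (hap : Aperiodic μ K) {φ : Ω → ℂ} (hφ : Measurable φ)
    (hφ1 : ∀ᵐ x ∂μ, ‖φ x‖ = 1) (k : ℂ) (N : ℕ) (hN : 0 < N) (hkN : k ^ N = 1)
    (h : ∀ᵐ p ∂(μ.prod μ), K p.1 p.2 ≠ 0 → φ p.2 = k * φ p.1) : k = 1 := by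
  set d := orderOf k with hd
  have hd0 : 0 < d := orderOf_pos_iff.2 (isOfFinOrder_iff_pow_eq_one.2 ⟨N, hN, hkN⟩)
  have : NeZero d := ⟨hd0.ne'⟩
  have hkd : k ^ d = 1 := pow_orderOf_eq_one k
  have hk0 : k ≠ 0 := by
    rintro rfl
    rw [zero_pow hN.ne'] at hkN; exact zero_ne_one hkN
  obtain ⟨c, hc⟩ := const_of_irr μ hI (hφ.pow_const d) (by
    filter_upwards [h] with p hp hne
    rw [hp hne, mul_pow, hkd, one_mul])
  obtain ⟨x0, hx0, hx1⟩ := (hc.and hφ1).exists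
  set c0 := φ x0 with hc0
  have hc00 : c0 ≠ 0 := by intro h0; rw [h0] at hx1; simp at hx1
  have hroot : ∀ᵐ x ∂μ, ∃ j : ZMod d, φ x = c0 * k ^ j.val := by
    filter_upwards [hc] with x hx
    have h1 : (φ x / c0) ^ d = 1 := by
      rw [div_pow, hx, ← show c0 ^ d = c from hx0, div_self (pow_ne_zero _ hc00)]
    obtain ⟨i, hi, hi2⟩ := (IsPrimitiveRoot.orderOf k).eq_pow_of_pow_eq_one h1
    refine ⟨(i : ZMod d), ?_⟩
    rw [ZMod.val_natCast, pow_mod_orderOf, hi2]; field_simp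
  set Q : ZMod d → Set Ω := fun j => {x | φ x = c0 * k ^ j.val} with hQ
  have hQm : ∀ j, MeasurableSet (Q j) := fun j => hφ (measurableSet_singleton _)
  have hQd : ∀ i j x, x ∈ Q i → x ∈ Q j → i = j := by
    intro i j x hi hj
    have h1 : c0 * k ^ i.val = c0 * k ^ j.val := by
      rw [← show φ x = _ from hi, ← show φ x = _ from hj]
    have h2 := mul_left_cancel₀ hc00 h1
    exact ZMod.val_injective d (pow_injOn_Iio_orderOf (ZMod.val_lt i) (ZMod.val_lt j) h2)
  set P : ZMod d → Set Ω := fun j => if j = 0 then (⋃ i : {i : ZMod d // i ≠ 0}, Q i)ᶜ else Q j with hP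
  have hQP : ∀ j, Q j ⊆ P j := by
    intro j x hx
    by_cases hj : j = 0
    · simp only [hP, hj, if_true, mem_compl_iff, mem_iUnion, not_exists]
      rintro ⟨i, hi⟩ hxi
      exact hi ((hQd i j x hxi hx).trans hj)
    · simpa only [hP, hj, if_false] using hx
  have hPd : ∀ i j x, x ∈ P i → x ∈ P j → i = j := by
    intro i j x hi hj
    by_cases hi0 : i = 0 <;> by_cases hj0 : j = 0
    · rw [hi0, hj0]
    · simp only [hP, hi0, hj0, if_true, if_false, mem_compl_iff, mem_iUnion, not_exists] at hi hj
      exact absurd hj (hi ⟨j, hj0⟩)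
    · simp only [hP, hi0, hj0, if_true, if_false, mem_compl_iff, mem_iUnion, not_exists] at hi hj
      exact absurd hi (hj ⟨i, hi0⟩)
    · simp only [hP, hi0, hj0, if_false] at hi hj
      exact hQd i j x hi hj
  have hper : GraphPeriodic μ K d := by
    refine ⟨P, ?_, ?_, ?_, ?_⟩
    · intro j
      by_cases hj : j = 0
      · simp only [hP, hj, if_true]
        exact (MeasurableSet.iUnion fun i : {i : ZMod d // i ≠ 0} => hQm i).compl
      · simp only [hP, hj, if_false]; exact hQm j
    · intro i j hij
      rw [Function.onFun, Set.disjoint_left]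
      intro x hi hj
      exact hij (hPd i j x hi hj)
    · rw [eq_univ_iff_forall]
      intro x
      by_cases hx : ∃ i : {i : ZMod d // i ≠ 0}, x ∈ Q i
      · obtain ⟨i, hi⟩ := hx
        exact mem_iUnion.2 ⟨i, hQP _ hi⟩
      · refine mem_iUnion.2 ⟨0, ?_⟩
        simpa only [hP, if_true, mem_compl_iff, mem_iUnion] using hx
    · intro j
      rw [measure_eq_zero_iff_ae_notMem]
      have hr1 : ∀ᵐ p ∂(μ.prod μ), ∃ j : ZMod d, φ p.1 = c0 * k ^ j.val :=
        Measure.quasiMeasurePreserving_fst.ae hroot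
      filter_upwards [h, hr1] with p hp hp1
      rintro ⟨h1, h2, h3⟩
      obtain ⟨i, hi⟩ := hp1
      have hij : i = j := hPd i j p.1 (hQP i hi) h1
      subst hij
      apply h2
      apply hQP
      have := hp h3
      simp only [hQ, mem_ofPred_eq]
      rw [this, hi, ZMod.val_add, pow_mod_orderOf, ZMod.val_one_eq_one_mod, pow_add, pow_mod_orderOf]
      ring
  have := hap d hd0 hper
  exact orderOf_eq_one_iff.1 this

end

section
variable (μ : Measure Ω) [IsProbabilityMeasure μ]

lemma eig_abs_ge {K : Ω → Ω → ℝ} (hK : IsDigraphon K) (lam : ℂ) {f : Ω → ℂ}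
    (hfe : ∀ᵐ x ∂μ, kapp μ (ck K) f x = lam * f x) :
    ∀ᵐ x ∂μ, ‖lam‖ * ‖f x‖ ≤ ∫ y, K x y * ‖f y‖ ∂μ := by
  filter_upwards [hfe] with x hx
  rw [← norm_mul, ← hx, kapp]
  refine (norm_integral_le_integral_norm _).trans (le_of_eq ?_)
  congr 1; ext y
  rw [norm_mul, ck, Complex.norm_real, Real.norm_of_nonneg (hK.2 x y).1]

lemma app_memLp {K : Ω → Ω → ℝ} (hK : IsDigraphon K) {a : Ω → ℝ} (ha : MemLp a 2 μ) :
    MemLp (fun x => ∫ y, K x y * a y ∂μ) 2 μ := by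
  have h := (kapp_memLp μ hK.kb (f := fun y => (a y : ℂ)) ha.ofReal).re
  refine h.ae_eq (Eventually.of_forall fun x => ?_)
  simp only [kapp, ck]
  have : ∫ y, (K x y : ℂ) * (a y : ℂ) ∂μ = ((∫ y, K x y * a y ∂μ : ℝ) : ℂ) := by
    rw [← integral_complex_ofReal]; congr 1; ext y; push_cast; rfl
  rw [this]; simp

lemma eig_mod {K : Ω → Ω → ℝ} (hK : IsDigraphon K) (t : ℝ) {l : Ω → ℝ}
    (hl : MemLp l 2 μ) (hl0 : ∀ᵐ x ∂μ, 0 < l x) (hle : ∀ᵐ x ∂μ, ∫ y, K y x * l y ∂μ = t * l x)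
    (m : ℝ) {a : Ω → ℝ} (ha : MemLp a 2 μ) (ha0 : ∀ x, 0 ≤ a x) (hne : ¬ (a =ᵐ[μ] 0))
    (hge : ∀ᵐ x ∂μ, m * a x ≤ ∫ y, K x y * a y ∂μ) :
    m ≤ t ∧ (m = t → ∀ᵐ x ∂μ, ∫ y, K x y * a y ∂μ = t * a x) := by
  set Sa : Ω → ℝ := fun x => ∫ y, K x y * a y ∂μ with hSa
  have hSam : MemLp Sa 2 μ := app_memLp μ hK ha
  have hla : Integrable (fun x => l x * a x) μ := hl.integrable_mul ha
  have hlS : Integrable (fun x => l x * Sa x) μ := hl.integrable_mul hSam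
  have hpos : 0 < ∫ x, l x * a x ∂μ := by
    refine lt_of_le_of_ne (integral_nonneg_of_ae ?_) fun h => ?_
    · filter_upwards [hl0] with x hx
      exact mul_nonneg hx.le (ha0 x)
    · rw [eq_comm, integral_eq_zero_iff_of_nonneg_ae ?_ hla] at h
      · apply hne
        filter_upwards [h, hl0] with x hx hx0
        simp only [Pi.zero_apply] at hx ⊢
        exact (mul_eq_zero.1 hx).resolve_left hx0.ne'
      · filter_upwards [hl0] with x hx
        exact mul_nonneg hx.le (ha0 x)
  have hF : ∫ x, l x * Sa x ∂μ = t * ∫ x, l x * a x ∂μ := by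
    rw [hSa, fub μ K hK.1 hK.norm_le (ha.integrable (by norm_num)) (hl.integrable (by norm_num)),
      ← integral_const_mul]
    refine integral_congr_ae ?_
    filter_upwards [hle] with x hx
    rw [hx]; ring
  have hd : ∫ x, (l x * Sa x - m * (l x * a x)) ∂μ = (t - m) * ∫ x, l x * a x ∂μ := by
    rw [integral_sub hlS (hla.const_mul m), hF, integral_const_mul]; ring
  have hnn : 0 ≤ᵐ[μ] fun x => l x * Sa x - m * (l x * a x) := by
    filter_upwards [hge, hl0] with x hx hx0
    have : 0 ≤ l x * (Sa x - m * a x) := mul_nonneg hx0.le (sub_nonneg.2 hx)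
    simp only [Pi.zero_apply]; linarith
  refine ⟨?_, ?_⟩
  · have := integral_nonneg_of_ae hnn
    rw [hd] at this
    by_contra! hcon
    nlinarith
  · rintro rfl
    rw [sub_self, zero_mul, integral_eq_zero_iff_of_nonneg_ae hnn (hlS.sub (hla.const_mul m))] at hd
    filter_upwards [hd, hl0] with x hx hx0
    simp only [Pi.zero_apply] at hx
    have : l x * (Sa x - m * a x) = 0 := by linarith
    have := (mul_eq_zero.1 this).resolve_left hx0.ne'
    linarith

lemma eig_phase {K : Ω → Ω → ℝ} (hK : IsDigraphon K) (t : ℝ) (ht : 0 < t) (lam : ℂ) (hlam : ‖lam‖ = t)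
    {f : Ω → ℂ} (hfm : Measurable f) (hf : MemLp f 2 μ)
    (hfe : ∀ᵐ x ∂μ, kapp μ (ck K) f x = lam * f x)
    (hpos : ∀ᵐ x ∂μ, 0 < ‖f x‖) (hS : ∀ᵐ x ∂μ, ∫ y, K x y * ‖f y‖ ∂μ = t * ‖f x‖) :
    ∀ᵐ p ∂(μ.prod μ), K p.1 p.2 ≠ 0 → f p.2 / ‖f p.2‖ = (lam / t) * (f p.1 / ‖f p.1‖) := by
  have hset : MeasurableSet {p : Ω × Ω | K p.1 p.2 ≠ 0 → f p.2 / ‖f p.2‖ = (lam / t) * (f p.1 / ‖f p.1‖)} := by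
    have : {p : Ω × Ω | K p.1 p.2 ≠ 0 → f p.2 / ‖f p.2‖ = (lam / t) * (f p.1 / ‖f p.1‖)} =
      {p | Function.uncurry K p = 0} ∪ {p : Ω × Ω | f p.2 / ‖f p.2‖ = (lam / t) * (f p.1 / ‖f p.1‖)} := by
      ext p; simp [Function.uncurry]; tauto
    rw [this]
    refine (hK.1 (measurableSet_singleton 0)).union (measurableSet_eq_fun ?_ ?_) <;> fun_prop
  rw [Measure.ae_prod_iff_ae_ae hset]
  filter_upwards [hfe, hpos, hS] with x hx hx0 hxS
  set ph : ℂ := (lam / t) * (f x / ‖f x‖) with hph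
  have hphn : ‖ph‖ = 1 := by
    rw [hph, norm_mul, norm_div, norm_div, hlam]
    simp only [Complex.norm_real, norm_norm]
    rw [Real.norm_of_nonneg ht.le, div_self ht.ne', div_self hx0.ne', one_mul]
  have hcc : (starRingEnd ℂ) ph * ph = 1 := by
    rw [mul_comm, Complex.mul_conj, Complex.normSq_eq_norm_sq, hphn]; simp
  have hlf : lam * f x = ph * ((t * ‖f x‖ : ℝ) : ℂ) := by
    rw [hph]
    have h1 : (t : ℂ) ≠ 0 := by exact_mod_cast ht.ne'
    have h2 : ((‖f x‖ : ℝ) : ℂ) ≠ 0 := by exact_mod_cast hx0.ne'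
    push_cast
    field_simp
  have hint := hK.kb.integrable_mul μ hf x
  have h1 : ∫ y, (K x y * ‖f y‖ - ((starRingEnd ℂ) ph * (ck K (x, y) * f y)).re) ∂μ = 0 := by
    have hint2 : Integrable (fun y => ((starRingEnd ℂ) ph * (ck K (x, y) * f y)).re) μ :=
      (hint.const_mul _).re
    rw [integral_sub (int_mul μ hK hf.norm x) hint2, hxS]
    have : ∫ y, ((starRingEnd ℂ) ph * (ck K (x, y) * f y)).re ∂μ
        = (∫ y, ((starRingEnd ℂ) ph * (ck K (x, y) * f y)) ∂μ).re := by
      exact integral_re (hint.const_mul _)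
    rw [this, integral_const_mul]
    have h3 : ∫ y, ck K (x, y) * f y ∂μ = lam * f x := hx
    rw [h3, hlf, ← mul_assoc, hcc, one_mul, Complex.ofReal_re, sub_self]
  have hre : ∀ y, ((starRingEnd ℂ) ph * (ck K (x, y) * f y)).re = K x y * ((starRingEnd ℂ) ph * f y).re := by
    intro y
    rw [ck, mul_left_comm, Complex.re_ofReal_mul]
  have hcn : ∀ y, ‖(starRingEnd ℂ) ph * f y‖ = ‖f y‖ := by
    intro y; rw [norm_mul, RCLike.norm_conj, hphn, one_mul]
  have hintd : Integrable (fun y => K x y * ‖f y‖ - ((starRingEnd ℂ) ph * (ck K (x, y) * f y)).re) μ :=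
    (int_mul μ hK hf.norm x).sub (hint.const_mul _).re
  rw [integral_eq_zero_iff_of_nonneg_ae ?_ hintd] at h1
  · filter_upwards [h1, hpos] with y hy hy0 hK0
    simp only [Pi.zero_apply] at hy
    rw [hre, ← mul_sub] at hy
    have h2 := (mul_eq_zero.1 hy).resolve_left hK0
    have h3 : ((starRingEnd ℂ) ph * f y).re = ‖(starRingEnd ℂ) ph * f y‖ := by rw [hcn]; linarith
    have h4 : (starRingEnd ℂ) ph * f y = (‖f y‖ : ℂ) := by
      have h5 := Complex.re_eq_norm.1 h3
      apply Complex.ext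
      · rw [h3, hcn]; simp
      · rw [← (Complex.nonneg_iff.1 h5).2]; simp
    have h6 : f y = ph * ‖f y‖ := by
      rw [← h4, ← mul_assoc, mul_comm ph, hcc, one_mul]
    have h7 : ((‖f y‖ : ℝ) : ℂ) ≠ 0 := by exact_mod_cast hy0.ne'
    rw [div_eq_iff h7]; exact h6
  · refine Eventually.of_forall fun y => ?_
    simp only [Pi.zero_apply]
    rw [hre, ← mul_sub]
    refine mul_nonneg (hK.2 x y).1 (sub_nonneg.2 ?_)
    rw [← hcn y]; exact Complex.re_le_norm _

lemma eig_root {K : Ω → Ω → ℝ} (hK : IsDigraphon K) (t : ℝ) (ht : 0 < t) {l : Ω → ℝ}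
    (hl : MemLp l 2 μ) (hl0 : ∀ᵐ x ∂μ, 0 < l x) (hle : ∀ᵐ x ∂μ, ∫ y, K y x * l y ∂μ = t * l x)
    {a : Ω → ℝ} (ha : MemLp a 2 μ) (ha0 : ∀ᵐ x ∂μ, 0 < a x)
    (hae : ∀ᵐ x ∂μ, ∫ y, K x y * a y ∂μ = t * a x)
    {φ : Ω → ℂ} (hφ : Measurable φ) (hφ1 : ∀ᵐ x ∂μ, ‖φ x‖ = 1) (k : ℂ) (hk : ‖k‖ = 1)
    (h : ∀ᵐ p ∂(μ.prod μ), K p.1 p.2 ≠ 0 → φ p.2 = k * φ p.1) : ∃ N : ℕ, 0 < N ∧ k ^ N = 1 := by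
  by_contra! hcon
  set F : ℕ → Ω → ℂ := fun n x => φ x ^ n * (a x : ℂ) with hF
  have hFn : ∀ n, ∀ᵐ x ∂μ, ‖F n x‖ = a x := by
    intro n
    filter_upwards [hφ1, ha0] with x hx hx0
    rw [hF]; simp only
    rw [norm_mul, norm_pow, hx, one_pow, one_mul, Complex.norm_real, Real.norm_of_nonneg hx0.le]
  have hFm : ∀ n, MemLp (F n) 2 μ := by
    intro n
    refine MemLp.of_le ha ((hφ.pow_const n).aestronglyMeasurable.mul ha.ofReal.1) ?_
    filter_upwards [hFn n] with x hx
    rw [hx]; exact le_abs_self _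
  have hFe : ∀ n, ∀ᵐ x ∂μ, kapp μ (ck K) (F n) x = (t * k ^ n) * F n x := by
    intro n
    filter_upwards [Measure.ae_ae_of_ae_prod h, hae] with x hx hxa
    have : kapp μ (ck K) (F n) x = ∫ y, (k ^ n * φ x ^ n) * ((K x y * a y : ℝ) : ℂ) ∂μ := by
      rw [kapp]
      refine integral_congr_ae ?_
      filter_upwards [hx] with y hy
      simp only [ck, hF]
      by_cases h0 : K x y = 0
      · simp [h0]
      · rw [hy h0]; push_cast; ring
    rw [this, integral_const_mul, integral_complex_ofReal, hxa, hF]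
    push_cast; ring
  have hla : Integrable (fun x => l x * a x) μ := hl.integrable_mul ha
  set c := ∫ x, l x * a x ∂μ with hc
  have hcpos : 0 < c := by
    rw [hc, integral_pos_iff_support_of_nonneg_ae ?_ hla]
    · have : Function.support (fun x => l x * a x) =ᵐ[μ] univ := by
        rw [eventuallyEq_univ]
        filter_upwards [hl0, ha0] with x h1 h2
        exact (mul_pos h1 h2).ne'
      rw [measure_congr this]; simp
    · filter_upwards [hl0, ha0] with x h1 h2
      exact (mul_pos h1 h2).le
  -- pairing vanishes
  have hpair : ∀ n, 0 < n → ∫ x, (l x : ℂ) * F n x ∂μ = 0 := by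
    intro n hn
    have h1 := fub μ (fun x y => (K x y : ℂ)) hK.kb.1 (fun x y => by
      rw [Complex.norm_real]; exact hK.norm_le x y) ((hFm n).integrable (by norm_num))
      (hl.ofReal (K := ℂ) |>.integrable (by norm_num))
    have h2 : ∫ x, ((l x : ℝ) : ℂ) * ∫ y, (K x y : ℂ) * F n y ∂μ ∂μ = (t * k ^ n) * ∫ x, (l x : ℂ) * F n x ∂μ := by
      rw [← integral_const_mul]
      refine integral_congr_ae ?_
      filter_upwards [hFe n] with x hx
      have : ∫ y, (K x y : ℂ) * F n y ∂μ = _ := hx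
      rw [this]; ring
    have h3 : ∫ y, (∫ x, (K x y : ℂ) * ((l x : ℝ) : ℂ) ∂μ) * F n y ∂μ = t * ∫ x, (l x : ℂ) * F n x ∂μ := by
      rw [← integral_const_mul]
      refine integral_congr_ae ?_
      filter_upwards [hle] with y hy
      have : ∫ x, (K x y : ℂ) * ((l x : ℝ) : ℂ) ∂μ = ((t * l y : ℝ) : ℂ) := by
        rw [← hy, ← integral_complex_ofReal]; congr 1; ext x; push_cast; rfl
      rw [this]; push_cast; ring
    have h4 : (t * k ^ n) * ∫ x, (l x : ℂ) * F n x ∂μ = t * ∫ x, (l x : ℂ) * F n x ∂μ := by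
      rw [← h2, ← h3]; exact h1
    have h5 : (t : ℂ) * (k ^ n - 1) * ∫ x, (l x : ℂ) * F n x ∂μ = 0 := by linear_combination h4
    refine (mul_eq_zero.1 h5).resolve_left (mul_ne_zero (by exact_mod_cast ht.ne') ?_)
    exact sub_ne_zero.2 (hcon n hn)
  -- compactness
  set S := Op μ (ck K) hK.kb with hS
  set f : ℕ → Lp ℂ 2 μ := fun n => (hFm n).toLp with hf
  have hSf : ∀ n, S (f n) = ((t : ℂ) * k ^ n) • f n := by
    intro n
    rw [hS, hf]; simp only
    rw [Op_toLp, ← MemLp.toLp_const_smul]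
    exact MemLp.toLp_congr _ _ (hFe n)
  set M := ‖ha.toLp‖ with hM
  have hfn : ∀ n, ‖f n‖ ≤ M := by
    intro n
    refine Lp.norm_le_norm_of_ae_le ?_
    filter_upwards [(hFm n).coeFn_toLp, ha.coeFn_toLp, hFn n] with x h1 h2 h3
    rw [h1, h2, h3]; exact le_abs_self _
  have hcomp := (Op_compact μ hK.kb).isCompact_closure_image_closedBall (𝕜₁ := ℂ) (f := (S : Lp ℂ 2 μ →ₗ[ℂ] Lp ℂ 2 μ)) M
  obtain ⟨b, hb, ψ, hψ, hlim⟩ := ((isCompact_sphere (0 : ℂ) 1).prod hcomp).tendsto_subseq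
    (x := fun n => (k ^ n, S (f n)))
    (fun n => ⟨by simp [hk], subset_closure ⟨f n, by simpa using hfn n, rfl⟩⟩)
  have hk0 : k ≠ 0 := by rintro rfl; simp at hk
  have hb1 : b.1 ≠ 0 := by
    have := hb.1
    rintro h0
    rw [h0] at this; simp at this
  have htc : (t : ℂ) ≠ 0 := by exact_mod_cast ht.ne'
  have hfl : Tendsto (fun n => f (ψ n)) atTop (𝓝 (((t : ℂ) * b.1)⁻¹ • b.2)) := by
    have h1 := (continuous_fst.tendsto b).comp hlim
    have h2 := (continuous_snd.tendsto b).comp hlim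
    refine (((h1.const_mul (t : ℂ)).inv₀ (mul_ne_zero htc hb1)).smul h2).congr fun n => ?_
    simp only [Function.comp, hSf]
    rw [smul_smul, inv_mul_cancel₀ (mul_ne_zero htc (pow_ne_zero _ hk0)), one_smul]
  set lL : Lp ℝ 2 μ := MemLp.toLp l hl with hlL
  set L := ‖lL‖ with hL
  have hL0 : 0 ≤ L := norm_nonneg _
  obtain ⟨n0, hn0⟩ := Metric.cauchySeq_iff'.1 hfl.cauchySeq (c / (L + 1)) (by positivity)
  have hdist := hn0 (n0 + 1) (by omega)
  rw [dist_eq_norm] at hdist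
  set m := ψ n0 with hm
  have hlt : ψ n0 < ψ (n0 + 1) := hψ (by omega)
  obtain ⟨N, hN⟩ := Nat.exists_eq_add_of_lt hlt
  set n := ψ (n0+1) with hn
  -- contradiction
  have hge : c ≤ L * ‖f n - f m‖ := by
    have hint1 : Integrable (fun x => (l x : ℂ) * F (N+1) x) μ := hl.ofReal.integrable_mul (hFm _)
    have hint0 : Integrable (fun x => (l x : ℂ) * F 0 x) μ := hl.ofReal.integrable_mul (hFm _)
    have e0 : ∫ x, (l x : ℂ) * F 0 x ∂μ = c := by
      rw [hc, ← integral_complex_ofReal]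
      congr 1; ext x; simp [hF]
    have e1 : ∫ x, ((l x : ℂ) * F (N+1) x - (l x : ℂ) * F 0 x) ∂μ = -c := by
      rw [integral_sub hint1 hint0, hpair _ (Nat.succ_pos N), e0, zero_sub]
    have e2 : c ≤ ∫ x, ‖lL x‖ * ‖(f n - f m) x‖ ∂μ := by
      have : c = ‖∫ x, ((l x : ℂ) * F (N+1) x - (l x : ℂ) * F 0 x) ∂μ‖ := by
        rw [e1, norm_neg, Complex.norm_real, Real.norm_of_nonneg hcpos.le]
      rw [this]
      refine (norm_integral_le_integral_norm _).trans (le_of_eq ?_)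
      refine integral_congr_ae ?_
      filter_upwards [hl.coeFn_toLp, Lp.coeFn_sub (f n) (f m), (hFm n).coeFn_toLp, (hFm m).coeFn_toLp,
        hφ1] with x h1 h2 h3 h4 h5
      rw [hlL, h1, h2, Pi.sub_apply, h3, h4, ← mul_sub, norm_mul, Complex.norm_real]
      congr 1
      have : F n x - F m x = φ x ^ m * (F (N+1) x - F 0 x) := by
        simp only [hF]
        rw [hN, add_assoc, pow_add]; ring
      rw [this, norm_mul, norm_pow, h5, one_pow, one_mul]
    refine e2.trans ?_
    have h1 : MemLp (fun x => ‖lL x‖) 2 μ := (Lp.memLp _).norm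
    have h2 : MemLp (fun x => ‖(f n - f m) x‖) 2 μ := (Lp.memLp _).norm
    set l1 : Lp ℝ 2 μ := MemLp.toLp _ h1 with hl1
    set l2 : Lp ℝ 2 μ := MemLp.toLp _ h2 with hl2
    have h3 := real_inner_le_norm l1 l2
    rw [L2.inner_def] at h3
    have e3 : ∫ x, ‖lL x‖ * ‖(f n - f m) x‖ ∂μ = ∫ x, inner ℝ (l1 x) (l2 x) ∂μ := by
      refine integral_congr_ae ?_
      filter_upwards [h1.coeFn_toLp, h2.coeFn_toLp] with x h4 h5
      rw [hl1, hl2, h4, h5]; simp [mul_comm]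
    rw [e3]
    refine h3.trans (le_of_eq ?_)
    rw [hl1, hl2, Lp.norm_toLp, Lp.norm_toLp, eLpNorm_norm, eLpNorm_norm, ← Lp.norm_def, ← Lp.norm_def]
  have : L * ‖f n - f m‖ ≤ L * (c / (L + 1)) := by gcongr
  have h9 : L * (c / (L + 1)) < c := by
    rw [mul_div_assoc', div_lt_iff₀ (by positivity)]; nlinarith
  linarith

end

section
variable (μ : Measure Ω) [IsProbabilityMeasure μ]

/-- The cone of a.e. nonnegative functions. -/
def cone : Set (Lp ℂ 2 μ) := {f | ∀ᵐ x ∂μ, 0 ≤ (f x).re ∧ (f x).im = 0}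

lemma cone_closed : IsClosed (cone μ) := by
  refine IsSeqClosed.isClosed fun u f hu hf => ?_
  obtain ⟨ns, -, hns⟩ := (tendstoInMeasure_of_tendsto_Lp hf).exists_seq_tendsto_ae
  have hall : ∀ᵐ x ∂μ, ∀ n, 0 ≤ (u n x).re ∧ (u n x).im = 0 := ae_all_iff.2 hu
  have : ∀ᵐ x ∂μ, 0 ≤ (f x).re ∧ (f x).im = 0 := by
    filter_upwards [hns, hall] with x hx hx2
    refine ⟨?_, ?_⟩
    · exact ge_of_tendsto' ((Complex.continuous_re.tendsto _).comp hx) fun n => (hx2 _).1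
    · refine tendsto_nhds_unique ((Complex.continuous_im.tendsto _).comp hx) ?_
      refine tendsto_const_nhds.congr fun n => ?_
      exact ((hx2 _).2).symm
  exact this

lemma kapp_real {K : Ω → Ω → ℝ} {f : Ω → ℂ} {a : Ω → ℝ} (h : f =ᵐ[μ] fun x => (a x : ℂ)) (x : Ω) :
    kapp μ (ck K) f x = ((∫ y, K x y * a y ∂μ : ℝ) : ℂ) := by
  rw [kapp_congr μ (ck K) h, kapp, ← integral_complex_ofReal]
  congr 1; ext y; simp [ck]

lemma specRad_ge {W : Ω → Ω → ℝ} (hW : IsDigraphon W) (z : ℂ) (hz : IsEigenvalue μ W z) :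
    ‖z‖ ≤ specRad μ W := by
  refine le_csSup ?_ (Set.mem_insert_of_mem _ ⟨z, hz, rfl⟩)
  refine ⟨‖Op μ (ck fun x y => W y x) hW.transpose.kb‖, ?_⟩
  rintro r (rfl | ⟨z, ⟨f, hf, hf0, hfe⟩, rfl⟩)
  · exact norm_nonneg _
  · have h1 : Op μ (ck fun x y => W y x) hW.transpose.kb hf.toLp = z • hf.toLp := by
      rw [Op_toLp, ← MemLp.toLp_const_smul]
      refine MemLp.toLp_congr _ _ ?_
      filter_upwards [hfe] with x hx
      rw [kapp, Pi.smul_apply, smul_eq_mul, ← hx]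
      congr 1; ext y; rw [ck, mul_comm]
    have h2 : hf.toLp ≠ 0 := by
      intro h
      exact hf0 ((MemLp.toLp_eq_toLp_iff hf (MemLp.zero' (ε := ℂ))).1 h)
    have h3 := (Op μ (ck fun x y => W y x) hW.transpose.kb).le_opNorm hf.toLp
    rw [h1, norm_smul] at h3
    exact le_of_mul_le_mul_right h3 (norm_pos_iff.2 h2)

lemma kr {W : Ω → Ω → ℝ} (hW : IsDigraphon W) (hI : Irr μ W) (hτ : 0 < specRad μ W)
    {wL : Ω → ℝ} (hwL2 : MemLp wL 2 μ) (hwL0 : ¬(wL =ᵐ[μ] 0))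
    (hwLeig : ∀ᵐ x ∂μ, ∫ y, wL y * W y x ∂μ = specRad μ W * wL x) :
    ∃ l : Ω → ℝ, MemLp l 2 μ ∧ (∀ᵐ x ∂μ, 0 < l x) ∧
      ∀ᵐ x ∂μ, ∫ y, W y x * l y ∂μ = specRad μ W * l x := by
  set t := specRad μ W with ht
  have hWt := hW.transpose
  set K : Ω → Ω → ℝ := fun x y => W y x with hK
  set T := Op μ (ck K) hWt.kb with hT
  -- a real form of cone membership
  have hcone : ∀ f ∈ cone μ, f =ᵐ[μ] fun x => (((f x).re : ℝ) : ℂ) := by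
    intro f hf
    filter_upwards [hf] with x hx
    exact Complex.ext (by simp) (by simp [hx.2])
  have hbd : ∀ b : ℝ, t < b → ∃ C : ℝ, ∀ n : ℕ, ‖T ^ n‖ ≤ C * b ^ n := by
    intro b hb
    obtain ⟨b', hb0, hb', C, hC, h⟩ := abs_gelfand T (Op_compact μ hWt.kb) b (hτ.trans hb) (by
      intro z f hf hz
      refine lt_of_le_of_lt (specRad_ge μ hW z ⟨f, Lp.memLp f, ?_, ?_⟩) hb
      · intro h
        exact hf ((Lp.eq_zero_iff_ae_eq_zero).2 h)
      · have h1 := Op_apply μ hWt.kb f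
        rw [← hT, hz] at h1
        filter_upwards [h1, Lp.coeFn_smul z f] with x h1 h2
        rw [h2, Pi.smul_apply, smul_eq_mul] at h1
        rw [h1, kapp]; congr 1; ext y; rw [ck, mul_comm])
    refine ⟨C, fun n => (h n).trans ?_⟩
    gcongr
  have hu : MemLp (fun x => ((|wL x| : ℝ) : ℂ)) 2 μ := hwL2.norm.ofReal
  have hucoe := hu.coeFn_toLp
  have hTu := Op_apply μ hWt.kb hu.toLp
  obtain ⟨r, hrN, hr0, hr⟩ := abs_kr T (Op_compact μ hWt.kb) (cone μ) (cone_closed μ)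
    (by
      show ∀ᵐ x ∂μ, _
      filter_upwards [Lp.coeFn_zero ℂ 2 μ] with x hx
      simp [hx])
    (by
      intro f hf g hg
      show ∀ᵐ x ∂μ, _
      filter_upwards [Lp.coeFn_add f g, hf, hg] with x hx h1 h2
      rw [hx]; simp [h1.2, h2.2, add_nonneg h1.1 h2.1])
    (by
      intro f hf c hc
      show ∀ᵐ x ∂μ, _
      filter_upwards [Lp.coeFn_smul (c : ℂ) f, hf] with x hx h1
      rw [hx]; simp [h1.2, mul_nonneg hc h1.1])
    (by
      intro f hf
      show ∀ᵐ x ∂μ, _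
      filter_upwards [Op_apply μ hWt.kb f] with x hx
      rw [hx, kapp_real μ (hcone f hf)]
      refine ⟨?_, by simp⟩
      rw [Complex.ofReal_re]
      refine integral_nonneg_of_ae ?_
      filter_upwards [hf] with y hy
      exact mul_nonneg (hWt.2 x y).1 hy.1)
    (by
      intro f hf g hg
      refine Lp.norm_le_norm_of_ae_le ?_
      filter_upwards [hf, hg, Lp.coeFn_sub g f] with x h1 h2 h3
      rw [h3] at h2
      simp only [Pi.sub_apply, Complex.sub_re, Complex.sub_im] at h2
      have e1 : f x = (((f x).re : ℝ) : ℂ) := Complex.ext (by simp) (by simp [h1.2])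
      rw [e1, Complex.norm_real, Real.norm_of_nonneg h1.1]
      exact (by linarith : (f x).re ≤ (g x).re).trans (Complex.re_le_norm _))
    t hτ hu.toLp
    (by
      show ∀ᵐ x ∂μ, _
      filter_upwards [hucoe] with x hx
      rw [hx]; simp)
    (by
      intro h
      have := (MemLp.toLp_eq_toLp_iff hu (MemLp.zero' (ε := ℂ))).1 h
      apply hwL0
      filter_upwards [this] with x hx
      simpa using hx)
    (by
      show ∀ᵐ x ∂μ, _
      filter_upwards [Lp.coeFn_sub (T hu.toLp) ((t : ℂ) • hu.toLp), Lp.coeFn_smul (t : ℂ) hu.toLp,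
        hucoe, hTu, hwLeig] with x h1 h2 h3 h4 h5
      rw [h1, Pi.sub_apply, h2, Pi.smul_apply, h3, hT, h4, kapp_real μ hucoe]
      have h6 : t * |wL x| ≤ ∫ y, K x y * |wL y| ∂μ := by
        have : t * |wL x| = |∫ y, wL y * W y x ∂μ| := by rw [h5, abs_mul, abs_of_pos hτ]
        rw [this, ← Real.norm_eq_abs]
        refine (norm_integral_le_integral_norm _).trans (le_of_eq ?_)
        congr 1; ext y
        rw [norm_mul, mul_comm, Real.norm_of_nonneg (hW.2 y x).1, Real.norm_eq_abs]
      simp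
      exact h6)
    hbd
  have hrm : MemLp (fun x => (r x).re) 2 μ := (Lp.memLp r).re
  have hre : ∀ᵐ x ∂μ, ∫ y, K x y * (r y).re ∂μ = t * (r x).re := by
    have h1 := Op_apply μ hWt.kb r
    rw [← hT, hr] at h1
    filter_upwards [h1, Lp.coeFn_smul (t : ℂ) r] with x h1 h2
    rw [h2, kapp_real μ (hcone r hrN)] at h1
    have := congrArg Complex.re h1
    simpa using this.symm
  refine ⟨_, hrm, ?_, hre⟩
  refine pos_of_irr μ hWt (Irr.transpose μ hI) t hrm ?_ ?_ hre
  · filter_upwards [hrN] with x hx using hx.1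
  · intro h
    apply hr0
    refine (Lp.eq_zero_iff_ae_eq_zero).2 ?_
    filter_upwards [h, hcone r hrN] with x h1 h2
    rw [h2]; simpa using h1

end

section
variable (μ : Measure Ω) [IsProbabilityMeasure μ]

lemma eig_main {W : Ω → Ω → ℝ} (hW : IsDigraphon W) (hI : Irr μ W) (hap : Aperiodic μ W)
    (t : ℝ) (ht : 0 < t) {l : Ω → ℝ}
    (hl : MemLp l 2 μ) (hl0 : ∀ᵐ x ∂μ, 0 < l x) (hle : ∀ᵐ x ∂μ, ∫ y, W y x * l y ∂μ = t * l x)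
    (lam : ℂ) {f : Ω → ℂ} (hf : MemLp f 2 μ) (hf0 : ¬ (f =ᵐ[μ] 0))
    (hfe : ∀ᵐ x ∂μ, kapp μ (ck W) f x = lam * f x) :
    ‖lam‖ ≤ t ∧ (‖lam‖ = t → lam = t ∧ ∫ x, f x ∂μ ≠ 0) := by
  obtain ⟨g, hg, hfg⟩ := hf.1.aemeasurable
  have hgm : MemLp g 2 μ := hf.ae_eq hfg
  have hge : ∀ᵐ x ∂μ, kapp μ (ck W) g x = lam * g x := by
    filter_upwards [hfe, hfg] with x h1 h2
    rw [← kapp_congr μ _ hfg, h1, h2]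
  have hg0 : ¬ ((fun x => ‖g x‖) =ᵐ[μ] 0) := by
    intro h
    apply hf0
    filter_upwards [h, hfg] with x h1 h2
    rw [h2]; simpa using h1
  obtain ⟨h1, h2⟩ := eig_mod μ hW t hl hl0 hle ‖lam‖ hgm.norm (fun x => norm_nonneg _) hg0
    (eig_abs_ge μ hW lam hge)
  refine ⟨h1, fun heq => ?_⟩
  have h3 := h2 heq
  have hpos := pos_of_irr μ hW hI t hgm.norm (Eventually.of_forall fun x => norm_nonneg _) hg0 h3
  have hph := eig_phase μ hW t ht lam heq hg hgm hge hpos h3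
  have hφ : Measurable (fun x => g x / ‖g x‖) := by fun_prop
  have hφ1 : ∀ᵐ x ∂μ, ‖g x / (‖g x‖ : ℂ)‖ = 1 := by
    filter_upwards [hpos] with x hx
    rw [norm_div, Complex.norm_real, norm_norm, div_self hx.ne']
  have htc : (t : ℂ) ≠ 0 := by exact_mod_cast ht.ne'
  obtain ⟨N, hN, hkN⟩ := eig_root μ hW t ht hl hl0 hle hgm.norm hpos h3 hφ hφ1 (lam / t)
    (by rw [norm_div, heq, Complex.norm_real, Real.norm_of_nonneg ht.le, div_self ht.ne']) hph
  have hk1 := aper μ hI hap hφ hφ1 (lam / t) N hN hkN hph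
  refine ⟨by rwa [div_eq_one_iff_eq htc] at hk1, ?_⟩
  rw [hk1] at hph
  obtain ⟨c, hc⟩ := const_of_irr μ hI hφ (by
    filter_upwards [hph] with p hp h
    rw [hp h, one_mul])
  have hgc : ∀ᵐ x ∂μ, g x = c * ((‖g x‖ : ℝ) : ℂ) := by
    filter_upwards [hc, hpos] with x h1 h2
    have h7 : ((‖g x‖ : ℝ) : ℂ) ≠ 0 := by exact_mod_cast h2.ne'
    rw [← h1]; field_simp
  have hc0 : c ≠ 0 := by
    rintro rfl
    apply hg0
    filter_upwards [hgc] with x hx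
    rw [hx]; simp
  have : ∫ x, f x ∂μ = c * ((∫ x, ‖g x‖ ∂μ : ℝ) : ℂ) := by
    rw [integral_congr_ae hfg, integral_congr_ae hgc, integral_const_mul, integral_complex_ofReal]
  rw [this]
  refine mul_ne_zero hc0 ?_
  rw [Complex.ofReal_ne_zero]
  intro h
  apply hg0
  exact (integral_eq_zero_iff_of_nonneg_ae (Eventually.of_forall fun x => norm_nonneg _)
    (hgm.norm.integrable (by norm_num))).1 h

lemma eig_simple {W : Ω → Ω → ℝ} (hW : IsDigraphon W) (hI : Irr μ W) (hap : Aperiodic μ W)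
    (t : ℝ) (ht : 0 < t) {l : Ω → ℝ}
    (hl : MemLp l 2 μ) (hl0 : ∀ᵐ x ∂μ, 0 < l x) (hle : ∀ᵐ x ∂μ, ∫ y, W y x * l y ∂μ = t * l x)
    {f g : Ω → ℂ} (hf : MemLp f 2 μ) (hg : MemLp g 2 μ) (hg0 : ¬ (g =ᵐ[μ] 0))
    (hfe : ∀ᵐ x ∂μ, kapp μ (ck W) f x = t * f x) (hge : ∀ᵐ x ∂μ, kapp μ (ck W) g x = t * g x) :
    ∃ s : ℂ, f =ᵐ[μ] fun x => s * g x := by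
  have htn : ‖(t : ℂ)‖ = t := by rw [Complex.norm_real, Real.norm_of_nonneg ht.le]
  have h1 := ((eig_main μ hW hI hap t ht hl hl0 hle t hg hg0 hge).2 htn).2
  set s := (∫ x, f x ∂μ) / ∫ x, g x ∂μ with hs
  refine ⟨s, ?_⟩
  have hm : MemLp (fun x => f x - s * g x) 2 μ := hf.sub (hg.const_mul s)
  by_contra hcon
  refine ((eig_main μ hW hI hap t ht hl hl0 hle t hm ?_ ?_).2 htn).2 ?_
  · intro h
    apply hcon
    filter_upwards [h] with x hx
    exact sub_eq_zero.1 hx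
  · filter_upwards [hfe, hge] with x h2 h3
    have : kapp μ (ck W) (fun x => f x - s * g x) x = kapp μ (ck W) f x - s * kapp μ (ck W) g x := by
      simp only [kapp]
      rw [← integral_const_mul, ← integral_sub (hW.kb.integrable_mul μ hf x)
        ((hW.kb.integrable_mul μ hg x).const_mul s)]
      congr 1; ext y; ring
    rw [this, h2, h3]; ring
  · rw [integral_sub (hf.integrable (by norm_num)) ((hg.integrable (by norm_num)).const_mul s),
      integral_const_mul, hs, div_mul_cancel₀ _ h1, sub_self]

end

section
variable (μ : Measure Ω) [IsProbabilityMeasure μ]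

lemma pair_kapp {W : Ω → Ω → ℝ} (hW : IsDigraphon W) (t : ℝ) {wL : Ω → ℝ} (hwL2 : MemLp wL 2 μ)
    (hwLeig : ∀ᵐ x ∂μ, ∫ y, wL y * W y x ∂μ = t * wL x) {f : Ω → ℂ} (hf : MemLp f 2 μ) :
    ∫ x, (wL x : ℂ) * kapp μ (ck W) f x ∂μ = t * ∫ x, (wL x : ℂ) * f x ∂μ := by
  have h1 := fub μ (fun x y => (W x y : ℂ)) hW.kb.1 (fun x y => by
      rw [Complex.norm_real]; exact hW.norm_le x y) (hf.integrable (by norm_num))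
      (hwL2.ofReal (K := ℂ) |>.integrable (by norm_num))
  refine Eq.trans h1 ?_
  rw [← integral_const_mul]
  refine integral_congr_ae ?_
  filter_upwards [hwLeig] with y hy
  have : ∫ x, (W x y : ℂ) * ((wL x : ℝ) : ℂ) ∂μ = ((t * wL y : ℝ) : ℂ) := by
    rw [← hy, ← integral_complex_ofReal]; congr 1; ext x; push_cast; ring
  rw [← mul_assoc]
  congr 1
  refine Eq.trans this ?_
  push_cast; rfl

lemma decay_op {W : Ω → Ω → ℝ} (hW : IsDigraphon W) (hI : Irr μ W) (hap : Aperiodic μ W)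
    (t : ℝ) (ht : 0 < t) {l : Ω → ℝ}
    (hl : MemLp l 2 μ) (hl0 : ∀ᵐ x ∂μ, 0 < l x) (hle : ∀ᵐ x ∂μ, ∫ y, W y x * l y ∂μ = t * l x)
    {wL wR : Ω → ℝ} (hwL2 : MemLp wL 2 μ) (hwR2 : MemLp wR 2 μ)
    (hwLeig : ∀ᵐ x ∂μ, ∫ y, wL y * W y x ∂μ = t * wL x)
    (hwReig : ∀ᵐ x ∂μ, ∫ y, W x y * wR y ∂μ = t * wR x)
    (hnorm : ∫ x, wL x * wR x ∂μ = 1) :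
    ∃ B : Lp ℂ 2 μ →L[ℂ] Lp ℂ 2 μ,
      (∀ (f : Ω → ℂ) (hf : MemLp f 2 μ), ∫ x, (wL x : ℂ) * f x ∂μ = 0 →
        B hf.toLp = (kapp_memLp μ hW.kb hf).toLp) ∧
      ∃ b : ℝ, 0 < b ∧ b < t ∧ ∃ C : ℝ, 0 < C ∧ ∀ n : ℕ, ‖B ^ n‖ ≤ C * b ^ n := by
  set S := Op μ (ck W) hW.kb with hS
  have hL : MemLp (fun x => (wL x : ℂ)) 2 μ := hwL2.ofReal
  have hR : MemLp (fun x => (wR x : ℂ)) 2 μ := hwR2.ofReal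
  set R := (ContinuousLinearMap.toSpanSingleton ℂ ((t : ℂ) • hR.toLp)).comp (innerSL ℂ hL.toLp) with hRdef
  have hinner : ∀ (g : Lp ℂ 2 μ), innerSL ℂ hL.toLp g = ∫ x, (wL x : ℂ) * g x ∂μ := by
    intro g
    rw [innerSL_apply_apply, L2.inner_def]
    refine integral_congr_ae ?_
    filter_upwards [hL.coeFn_toLp] with x hx
    rw [hx]; simp [mul_comm]
  have hLR : ∫ x, (wL x : ℂ) * (wR x : ℂ) ∂μ = 1 := by
    have : ∫ x, (wL x : ℂ) * (wR x : ℂ) ∂μ = ((∫ x, wL x * wR x ∂μ : ℝ) : ℂ) := by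
      rw [← integral_complex_ofReal]; congr 1; ext x; push_cast; rfl
    rw [this, hnorm]; simp
  have hRe : ∀ᵐ x ∂μ, kapp μ (ck W) (fun x => (wR x : ℂ)) x = t * (wR x : ℂ) := by
    filter_upwards [hwReig] with x hx
    rw [kapp_real μ (a := wR) EventuallyEq.rfl, hx]; push_cast; rfl
  have hR0 : ¬ ((fun x => (wR x : ℂ)) =ᵐ[μ] 0) := by
    intro h
    have : ∫ x, (wL x : ℂ) * (wR x : ℂ) ∂μ = 0 := by
      refine integral_eq_zero_of_ae ?_
      filter_upwards [h] with x hx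
      have : (wR x : ℂ) = 0 := hx
      rw [this]; simp
    rw [hLR] at this
    exact one_ne_zero this
  have hRap : ∀ g, R g = (∫ x, (wL x : ℂ) * g x ∂μ) • ((t : ℂ) • hR.toLp) := by
    intro g
    rw [hRdef, ContinuousLinearMap.comp_apply, hinner, ContinuousLinearMap.toSpanSingleton_apply]
  refine ⟨S - R, ?_, ?_⟩
  · intro f hf h0
    rw [sub_apply, hRap, hS, Op_toLp]
    have : ∫ x, (wL x : ℂ) * (MemLp.toLp f hf : Lp ℂ 2 μ) x ∂μ = 0 := by
      rw [← h0]
      refine integral_congr_ae ?_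
      filter_upwards [hf.coeFn_toLp] with x hx
      rw [hx]
    rw [this, zero_smul, sub_zero]
  · refine abs_gelfand (S - R) ((Op_compact μ hW.kb).sub (compact_rankone _ _)) t ht ?_
    intro lam f hf hlam
    by_cases hlz : lam = 0
    · rw [hlz, norm_zero]; exact ht
    set q := ∫ x, (wL x : ℂ) * f x ∂μ with hq
    rw [sub_apply, hRap, ← hq] at hlam
    have hae : ∀ᵐ x ∂μ, kapp μ (ck W) f x - q * (t * wR x) = lam * f x := by
      have h1 : (S f - q • ((t : ℂ) • hR.toLp) : Lp ℂ 2 μ) =ᵐ[μ] (lam • f : Lp ℂ 2 μ) := by rw [hlam]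
      filter_upwards [h1, Lp.coeFn_sub (S f) (q • ((t : ℂ) • hR.toLp)), Lp.coeFn_smul q ((t : ℂ) • hR.toLp),
        Lp.coeFn_smul (t : ℂ) hR.toLp, hR.coeFn_toLp, Lp.coeFn_smul lam f, Op_apply μ hW.kb f]
        with x h1 h2 h3 h4 h5 h6 h7
      rw [h2, h6, Pi.sub_apply, h3, Pi.smul_apply, h4, Pi.smul_apply, h5, hS, h7] at h1
      simpa using h1
    have hfm := Lp.memLp f
    have hq0 : q = 0 := by
      have h1 : ∫ x, (wL x : ℂ) * (kapp μ (ck W) f x - q * (t * wR x)) ∂μ = lam * q := by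
        rw [hq, ← integral_const_mul]
        refine integral_congr_ae ?_
        filter_upwards [hae] with x hx
        rw [hx]; ring
      have h2 : ∫ x, (wL x : ℂ) * (kapp μ (ck W) f x - q * (t * wR x)) ∂μ = 0 := by
        have i1 : Integrable (fun x => (wL x : ℂ) * kapp μ (ck W) f x) μ :=
          hL.integrable_mul (kapp_memLp μ hW.kb hfm)
        have i2 : Integrable (fun x => (wL x : ℂ) * (wR x : ℂ)) μ := hL.integrable_mul hR
        have : ∀ x, (wL x : ℂ) * (kapp μ (ck W) f x - q * (t * wR x)) =
          (wL x : ℂ) * kapp μ (ck W) f x - (q * t) * ((wL x : ℂ) * (wR x : ℂ)) := fun x => by ring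
        simp_rw [this]
        rw [integral_sub i1 (i2.const_mul _), integral_const_mul, hLR,
          pair_kapp μ hW t hwL2 hwLeig hfm, ← hq]
        ring
      rw [h1] at h2
      exact (mul_eq_zero.1 h2).resolve_left hlz
    have hfe : ∀ᵐ x ∂μ, kapp μ (ck W) f x = lam * f x := by
      filter_upwards [hae] with x hx
      rw [← hx, hq0]; ring
    have hf0 : ¬ (f =ᵐ[μ] 0) := fun h => hf ((Lp.eq_zero_iff_ae_eq_zero).2 h)
    obtain ⟨h1, h2⟩ := eig_main μ hW hI hap t ht hl hl0 hle lam hfm hf0 hfe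
    refine lt_of_le_of_ne h1 fun h3 => ?_
    have h4 := (h2 h3).1
    rw [h4] at hfe
    obtain ⟨s, hs⟩ := eig_simple μ hW hI hap t ht hl hl0 hle hfm hR hR0 hfe hRe
    have h5 : q = s := by
      rw [hq]
      calc _ = ∫ x, s * ((wL x : ℂ) * (wR x : ℂ)) ∂μ := by
            refine integral_congr_ae ?_
            filter_upwards [hs] with x hx
            rw [hx]; ring
        _ = s := by rw [integral_const_mul, hLR, mul_one]
    apply hf0
    filter_upwards [hs] with x hx
    rw [hx, ← h5, hq0]; simp

lemma int_norm_le {f : Ω → ℂ} (hf : MemLp f 2 μ) : ∫ x, ‖f x‖ ∂μ ≤ ‖hf.toLp‖ := by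
  have h1 : MemLp f 1 μ := hf.mono_exponent (by norm_num)
  rw [Lp.norm_toLp, integral_norm_eq_lintegral_enorm hf.1, ← eLpNorm_one_eq_lintegral_enorm]
  exact ENNReal.toReal_mono hf.2.ne (eLpNorm_le_eLpNorm_of_exponent_le (by norm_num) hf.1)

lemma norm_toLp_le {f : Ω → ℂ} (hf : MemLp f 2 μ) {M : ℝ} (hM0 : 0 ≤ M) (hM : ∀ᵐ x ∂μ, ‖f x‖ ≤ M) :
    ‖hf.toLp‖ ≤ M := by
  rw [Lp.norm_toLp]
  have h := eLpNorm_le_of_ae_bound (p := 2) hM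
  simp only [measure_univ, ENNReal.one_rpow, one_mul] at h
  exact ENNReal.toReal_le_of_le_ofReal hM0 h

lemma eig_bdd {W : Ω → Ω → ℝ} (hW : IsDigraphon W) (t : ℝ) (ht : 0 < t) {w : Ω → ℝ} (hw : MemLp w 2 μ)
    (he : ∀ᵐ x ∂μ, ∫ y, W x y * w y ∂μ = t * w x) : ∃ M : ℝ, 0 ≤ M ∧ ∀ᵐ x ∂μ, |w x| ≤ M := by
  refine ⟨t⁻¹ * ∫ y, |w y| ∂μ, by positivity, ?_⟩
  filter_upwards [he] with x hx
  have h1 : t * |w x| ≤ ∫ y, |w y| ∂μ := by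
    have : t * |w x| = ‖∫ y, W x y * w y ∂μ‖ := by
      rw [hx, Real.norm_eq_abs, abs_mul, abs_of_pos ht]
    rw [this]
    refine (norm_integral_le_integral_norm _).trans ?_
    refine integral_mono (int_mul μ hW hw x).norm (hw.norm.integrable (by norm_num)) fun y => ?_
    simp only [norm_mul, Real.norm_eq_abs]
    have := hW.norm_le x y
    rw [Real.norm_eq_abs] at this
    exact mul_le_of_le_one_left (abs_nonneg _) this
  rwa [inv_mul_eq_div, le_div_iff₀' ht]

lemma decay_seq {W : Ω → Ω → ℝ} (hW : IsDigraphon W) (t : ℝ) {wL : Ω → ℝ} (hwL2 : MemLp wL 2 μ)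
    (hwLeig : ∀ᵐ x ∂μ, ∫ y, wL y * W y x ∂μ = t * wL x)
    (B : Lp ℂ 2 μ →L[ℂ] Lp ℂ 2 μ)
    (hB : ∀ (f : Ω → ℂ) (hf : MemLp f 2 μ), ∫ x, (wL x : ℂ) * f x ∂μ = 0 →
        B hf.toLp = (kapp_memLp μ hW.kb hf).toLp) (b C : ℝ) (hb : 0 < b) (hC : 0 < C)
    (hBn : ∀ n : ℕ, ‖B ^ n‖ ≤ C * b ^ n)
    (D : ℕ → Ω → ℂ) (hD : ∀ n, MemLp (D n) 2 μ) (hD0 : ∫ x, (wL x : ℂ) * D 0 x ∂μ = 0)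
    (hDs : ∀ n, D (n+1) =ᵐ[μ] kapp μ (ck W) (D n)) (M : ℝ) (hM0 : 0 ≤ M)
    (hM : ∀ᵐ x ∂μ, ‖D 0 x‖ ≤ M) (n : ℕ) : ∀ᵐ x ∂μ, ‖D (n+1) x‖ ≤ C * b ^ n * M := by
  have hpair : ∀ n, ∫ x, (wL x : ℂ) * D n x ∂μ = 0 := by
    intro n
    induction n with
    | zero => exact hD0
    | succ n ih =>
      have : ∫ x, (wL x : ℂ) * D (n+1) x ∂μ = ∫ x, (wL x : ℂ) * kapp μ (ck W) (D n) x ∂μ := by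
        refine integral_congr_ae ?_
        filter_upwards [hDs n] with x hx
        rw [hx]
      rw [this, pair_kapp μ hW t hwL2 hwLeig (hD n), ih, mul_zero]
  have hpow : ∀ n, (hD n).toLp = (B ^ n) (hD 0).toLp := by
    intro n
    induction n with
    | zero => simp
    | succ n ih =>
      rw [pow_succ', mul_apply_eq_comp, ← ih, hB _ (hD n) (hpair n)]
      exact MemLp.toLp_congr _ _ (hDs n)
  have hn : ‖(hD n).toLp‖ ≤ C * b ^ n * M := by
    rw [hpow]
    refine ((B ^ n).le_opNorm _).trans ?_
    exact mul_le_mul (hBn n) (norm_toLp_le μ (hD 0) hM0 hM) (norm_nonneg _) (by positivity)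
  filter_upwards [hDs n] with x hx
  rw [hx]
  refine le_trans ?_ ((int_norm_le μ (hD n)).trans hn)
  refine (norm_integral_le_integral_norm _).trans ?_
  refine integral_mono (hW.kb.integrable_mul μ (hD n) x).norm ((hD n).norm.integrable (by norm_num))
    fun y => ?_
  simp only [norm_mul]
  refine mul_le_of_le_one_left (norm_nonneg _) ?_
  rw [ck, Complex.norm_real]; exact hW.norm_le x y

lemma kpow_dig {W : Ω → Ω → ℝ} (hW : IsDigraphon W) (n : ℕ) : IsDigraphon (kpowAux μ W n) := by
  induction n with
  | zero => exact hW
  | succ n ih =>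
    refine ⟨?_, fun x y => ⟨?_, ?_⟩⟩
    · have h : Measurable (fun q : (Ω × Ω) × Ω => W q.1.1 q.2 * kpowAux μ W n q.2 q.1.2) := by
        have h1 : Measurable (fun q : (Ω × Ω) × Ω => W q.1.1 q.2) :=
          hW.1.comp ((measurable_fst.comp measurable_fst).prodMk measurable_snd)
        have h2 : Measurable (fun q : (Ω × Ω) × Ω => kpowAux μ W n q.2 q.1.2) :=
          ih.1.comp (measurable_snd.prodMk (measurable_snd.comp measurable_fst))
        exact h1.mul h2
      exact (h.stronglyMeasurable.integral_prod_right' (ν := μ)).measurable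
    · exact integral_nonneg fun z => mul_nonneg (hW.2 x z).1 (ih.2 z y).1
    · have : ∫ z, W x z * kpowAux μ W n z y ∂μ ≤ ∫ z, (1 : ℝ) ∂μ := by
        refine integral_mono_of_nonneg (Eventually.of_forall fun z =>
          mul_nonneg (hW.2 x z).1 (ih.2 z y).1) (integrable_const _) (Eventually.of_forall fun z => ?_)
        exact mul_le_one₀ (hW.2 x z).2 (ih.2 z y).1 (ih.2 z y).2
      exact this.trans_eq (by simp)

lemma final_meas {W : Ω → Ω → ℝ} (hW : IsDigraphon W) (hI : Irr μ W) (hap : Aperiodic μ W)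
    (t : ℝ) (ht : 0 < t) {l : Ω → ℝ}
    (hl : MemLp l 2 μ) (hl0 : ∀ᵐ x ∂μ, 0 < l x) (hle : ∀ᵐ x ∂μ, ∫ y, W y x * l y ∂μ = t * l x)
    {wL wR : Ω → ℝ} (hLm : Measurable wL) (hRm : Measurable wR)
    (hwL2 : MemLp wL 2 μ) (hwR2 : MemLp wR 2 μ)
    (hwLeig : ∀ᵐ x ∂μ, ∫ y, wL y * W y x ∂μ = t * wL x)
    (hwReig : ∀ᵐ x ∂μ, ∫ y, W x y * wR y ∂μ = t * wR x)
    (hnorm : ∫ x, wL x * wR x ∂μ = 1) :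
    ∃ β : ℝ, β ∈ Set.Ioo 0 t ∧ ∃ C : ℝ, 0 < C ∧
      ∀ n : ℕ, ∀ᵐ p : Ω × Ω ∂(μ.prod μ),
          |kpowAux μ W n p.1 p.2 - t ^ (n+1) * wR p.1 * wL p.2| ≤ C * β ^ (n+1) := by
  obtain ⟨B, hB, b, hb, hbt, C, hC, hBn⟩ :=
    decay_op μ hW hI hap t ht hl hl0 hle hwL2 hwR2 hwLeig hwReig hnorm
  obtain ⟨MR, hMR0, hMR⟩ := eig_bdd μ hW t ht hwR2 hwReig
  obtain ⟨ML, hML0, hML⟩ := eig_bdd μ hW.transpose t ht hwL2 (by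
    filter_upwards [hwLeig] with x hx
    rw [← hx]; congr 1; ext y; ring)
  set M : ℝ := 1 + t * MR * ML with hM
  have hM0 : 0 < M := by positivity
  have hLR : ∫ x, (wL x : ℂ) * (wR x : ℂ) ∂μ = 1 := by
    have : ∫ x, (wL x : ℂ) * (wR x : ℂ) ∂μ = ((∫ x, wL x * wR x ∂μ : ℝ) : ℂ) := by
      rw [← integral_complex_ofReal]; congr 1; ext x; push_cast; rfl
    rw [this, hnorm]; simp
  have hL : MemLp (fun x => (wL x : ℂ)) 2 μ := hwL2.ofReal
  have hR : MemLp (fun x => (wR x : ℂ)) 2 μ := hwR2.ofReal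
  refine ⟨b, ⟨hb, hbt⟩, M / b + C * M / b ^ 2, by positivity, fun n => ?_⟩
  -- reduce to iterated a.e.
  suffices h : ∀ᵐ y ∂μ, ∀ᵐ x ∂μ, |kpowAux μ W n x y - t ^ (n+1) * wR x * wL y|
      ≤ (M / b + C * M / b ^ 2) * b ^ (n+1) by
    have hset : MeasurableSet {p : Ω × Ω | |kpowAux μ W n p.2 p.1 - t ^ (n+1) * wR p.2 * wL p.1|
      ≤ (M / b + C * M / b ^ 2) * b ^ (n+1)} := by
      refine measurableSet_le ?_ measurable_const
      have h1 : Measurable (fun p : Ω × Ω => kpowAux μ W n p.2 p.1) :=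
        (kpow_dig μ hW n).1.comp measurable_swap
      have h2 : Measurable (fun p : Ω × Ω => t ^ (n+1) * wR p.2 * wL p.1) := by fun_prop
      exact continuous_abs.measurable.comp (h1.sub h2)
    exact ae_swap μ ((Measure.ae_prod_iff_ae_ae hset).2 h)
  filter_upwards [hML, hwLeig] with y hyM hye
  set D : ℕ → Ω → ℂ := fun n x => ((kpowAux μ W n x y : ℝ) : ℂ) - (t ^ (n+1) * wL y) * (wR x : ℂ) with hDdef
  have hDr : ∀ n x, ‖D n x‖ = |kpowAux μ W n x y - t ^ (n+1) * wR x * wL y| := by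
    intro n x
    rw [← Real.norm_eq_abs, ← Complex.norm_real]
    congr 1
    simp only [hDdef]; push_cast; ring
  have hKm : ∀ n, MemLp (fun x => ((kpowAux μ W n x y : ℝ) : ℂ)) 2 μ := by
    intro n
    refine MemLp.of_bound (Complex.measurable_ofReal.comp
      ((kpow_dig μ hW n).transpose.meas y)).aestronglyMeasurable 1 (Eventually.of_forall fun x => ?_)
    rw [Complex.norm_real]; exact (kpow_dig μ hW n).norm_le x y
  have hDm : ∀ n, MemLp (D n) 2 μ := fun n => (hKm n).sub (hR.const_mul _)
  have hD0 : ∫ x, (wL x : ℂ) * D 0 x ∂μ = 0 := by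
    have i1 : Integrable (fun x => (wL x : ℂ) * ((kpowAux μ W 0 x y : ℝ) : ℂ)) μ := hL.integrable_mul (hKm 0)
    have i2 : Integrable (fun x => (wL x : ℂ) * (wR x : ℂ)) μ := hL.integrable_mul hR
    have e1 : ∫ x, (wL x : ℂ) * ((kpowAux μ W 0 x y : ℝ) : ℂ) ∂μ = t * wL y := by
      have : ∫ x, (wL x : ℂ) * ((kpowAux μ W 0 x y : ℝ) : ℂ) ∂μ = ((∫ x, wL x * W x y ∂μ : ℝ) : ℂ) := by
        rw [← integral_complex_ofReal]; congr 1; ext x; push_cast; rfl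
      rw [this, hye]; push_cast; rfl
    have : ∀ x, (wL x : ℂ) * D 0 x = (wL x : ℂ) * ((kpowAux μ W 0 x y : ℝ) : ℂ)
        - (t * wL y) * ((wL x : ℂ) * (wR x : ℂ)) := fun x => by
      simp only [hDdef]; ring
    simp_rw [this]
    rw [integral_sub i1 (i2.const_mul _), integral_const_mul, hLR, e1]; ring
  have hDs : ∀ n, D (n+1) =ᵐ[μ] kapp μ (ck W) (D n) := by
    intro n
    filter_upwards [hwReig] with x hx
    have e1 : kapp μ (ck W) (D n) x = ∫ z, ck W (x, z) * ((kpowAux μ W n z y : ℝ) : ℂ) ∂μ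
        - (t ^ (n+1) * wL y) * ∫ z, ck W (x, z) * (wR z : ℂ) ∂μ := by
      rw [kapp, ← integral_const_mul, ← integral_sub (hW.kb.integrable_mul μ (hKm n) x)
        ((hW.kb.integrable_mul μ hR x).const_mul _)]
      congr 1; ext z; simp only [hDdef]; ring
    have e2 : ∫ z, ck W (x, z) * ((kpowAux μ W n z y : ℝ) : ℂ) ∂μ = ((kpowAux μ W (n+1) x y : ℝ) : ℂ) :=
      kapp_real μ (a := fun z => kpowAux μ W n z y) EventuallyEq.rfl x
    have e3 : ∫ z, ck W (x, z) * (wR z : ℂ) ∂μ = ((t * wR x : ℝ) : ℂ) := by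
      rw [← hx]; exact kapp_real μ (a := wR) EventuallyEq.rfl x
    rw [e1, e2, e3]
    simp only [hDdef]; push_cast; ring
  have hDM : ∀ᵐ x ∂μ, ‖D 0 x‖ ≤ M := by
    filter_upwards [hMR] with x hx
    rw [hDr]
    have h1 : |W x y| ≤ 1 := hW.norm_le x y
    have h2 : |t ^ (0+1) * wR x * wL y| ≤ t * MR * ML := by
      rw [abs_mul, abs_mul, zero_add, pow_one, abs_of_pos ht]
      gcongr
    exact (abs_sub _ _).trans (add_le_add h1 h2)
  have hmain := decay_seq μ hW t hwL2 hwLeig B hB b C hb hC hBn D hDm hD0 hDs M hM0.le hDM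
  rcases n with _ | n
  · filter_upwards [hDM] with x hx
    rw [hDr] at hx
    refine hx.trans ?_
    have : (M / b + C * M / b ^ 2) * b ^ (0+1) = M + C * M / b := by
      rw [zero_add, pow_one]; field_simp
    rw [this]
    have : 0 < C * M / b := by positivity
    linarith
  · filter_upwards [hmain n] with x hx
    rw [hDr] at hx
    refine hx.trans ?_
    have : (M / b + C * M / b ^ 2) * b ^ (n+1+1) = M * b ^ (n+1) + C * b ^ n * M := by
      field_simp; ring
    rw [this]
    have : 0 < M * b ^ (n+1) := by positivity
    linarith

lemma final {W : Ω → Ω → ℝ} (hW : IsDigraphon W)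
    (hconn : StronglyConnectedIn μ W Set.univ)
    (haper : Aperiodic μ W)
    (hτ : 0 < specRad μ W)
    (wL wR : Ω → ℝ)
    (hwL2 : MemLp wL 2 μ) (hwL0 : ¬(wL =ᵐ[μ] 0))
    (hwLeig : ∀ᵐ x ∂μ, ∫ y, wL y * W y x ∂μ = specRad μ W * wL x)
    (hwR2 : MemLp wR 2 μ)
    (hwReig : ∀ᵐ x ∂μ, ∫ y, W x y * wR y ∂μ = specRad μ W * wR x)
    (hnorm : ∫ x, wL x * wR x ∂μ = 1) :
    ∃ β : ℝ, β ∈ Set.Ioo 0 (specRad μ W) ∧ ∃ C : ℝ, 0 < C ∧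
      ∀ ℓ : ℕ, 1 ≤ ℓ →
        ∀ᵐ p : Ω × Ω ∂(μ.prod μ),
          |dpow μ W ℓ p.1 p.2 - specRad μ W ^ ℓ * wR p.1 * wL p.2| ≤ C * β ^ ℓ := by
  have hI := irr_of_conn μ hconn
  obtain ⟨l, hl, hl0, hle⟩ := kr μ hW hI hτ hwL2 hwL0 hwLeig
  obtain ⟨gL, hgL, hLg⟩ := hwL2.1.aemeasurable
  obtain ⟨gR, hgR, hRg⟩ := hwR2.1.aemeasurable
  obtain ⟨b, hb, C, hC, h⟩ := final_meas μ hW hI haper (specRad μ W) hτ hl hl0 hle hgL hgR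
    (hwL2.ae_eq hLg) (hwR2.ae_eq hRg)
    (by
      filter_upwards [hwLeig, hLg] with x h1 h2
      rw [← h2, ← h1]
      refine integral_congr_ae ?_
      filter_upwards [hLg] with y hy
      rw [hy])
    (by
      filter_upwards [hwReig, hRg] with x h1 h2
      rw [← h2, ← h1]
      refine integral_congr_ae ?_
      filter_upwards [hRg] with y hy
      rw [hy])
    (by
      rw [← hnorm]
      refine integral_congr_ae ?_
      filter_upwards [hLg, hRg] with y h1 h2
      rw [h1, h2])
  refine ⟨b, hb, C, hC, fun m hm => ?_⟩
  obtain ⟨n, rfl⟩ : ∃ n, m = n + 1 := ⟨m - 1, by omega⟩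
  filter_upwards [h n, Measure.quasiMeasurePreserving_fst.ae hRg, Measure.quasiMeasurePreserving_snd.ae hLg]
    with p h1 h2 h3
  rw [h2, h3]
  exact h1

end

/-- Asymptotics of high powers of a strongly connected aperiodic
digraphon. -/
theorem asymptotics_of_powers_aperiodic
    {Ω : Type*} [MeasurableSpace Ω] (μ : Measure Ω) [IsProbabilityMeasure μ]
    (W : Ω → Ω → ℝ) (hW : IsDigraphon W)
    (hconn : StronglyConnectedIn μ W Set.univ)
    (haper : Aperiodic μ W)
    (hτ : 0 < specRad μ W)
    (wL wR : Ω → ℝ)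
    (hwL2 : MemLp wL 2 μ) (hwL0 : ¬(wL =ᵐ[μ] 0))
    (hwLeig : ∀ᵐ x ∂μ, ∫ y, wL y * W y x ∂μ = specRad μ W * wL x)
    (hwR2 : MemLp wR 2 μ) (hwR0 : ¬(wR =ᵐ[μ] 0))
    (hwReig : ∀ᵐ x ∂μ, ∫ y, W x y * wR y ∂μ = specRad μ W * wR x)
    (hnorm : ∫ x, wL x * wR x ∂μ = 1) :
    ∃ β : ℝ, β ∈ Set.Ioo 0 (specRad μ W) ∧ ∃ C : ℝ, 0 < C ∧
      ∀ ℓ : ℕ, 1 ≤ ℓ →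
        ∀ᵐ p : Ω × Ω ∂(μ.prod μ),
          |dpow μ W ℓ p.1 p.2 - specRad μ W ^ ℓ * wR p.1 * wL p.2| ≤ C * β ^ ℓ := by
  exact final μ hW hconn haper hτ wL wR hwL2 hwL0 hwLeig hwR2 hwReig hnorm

end Digraphon
end

section
/- Let Γ be a digraphon on a probability space (Ω,μ), let x ∈ Ω, let Y ⊆ Ω be measurable, and let c ∈ [0,1). Define h : Ω → [0,1] by h(z) := μ(ReachOut_Γ(z) ∩ Y). If the set of points y reachable from x with h(y) > c has positive measure, then h(x) > c. -/
open MeasureTheory Filter Set Topology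
open scoped ENNReal Real

namespace Digraphon

variable {Ω : Type*} [MeasurableSpace Ω]

theorem kpowAux_meas (μ : Measure Ω) [IsProbabilityMeasure μ] (Γ : Ω → Ω → ℝ)
    (hΓ : IsDigraphon Γ) (n : ℕ) : Measurable (Function.uncurry (kpowAux μ Γ n)) := by
  induction n with
  | zero => exact hΓ.1
  | succ n ih =>
    have h1 : Measurable (fun q : (Ω × Ω) × Ω => Γ q.1.1 q.2 * kpowAux μ Γ n q.2 q.1.2) := by
      apply Measurable.mul
      · exact hΓ.1.comp (measurable_fst.fst.prodMk measurable_snd)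
      · exact ih.comp (measurable_snd.prodMk measurable_fst.snd)
    exact (h1.stronglyMeasurable.integral_prod_right (ν := μ)).measurable

theorem kpowAux_mem (μ : Measure Ω) [IsProbabilityMeasure μ] (Γ : Ω → Ω → ℝ)
    (hΓ : IsDigraphon Γ) (n : ℕ) (x y : Ω) : kpowAux μ Γ n x y ∈ Set.Icc (0 : ℝ) 1 := by
  induction n generalizing x y with
  | zero => exact hΓ.2 x y
  | succ n ih =>
    constructor
    · exact integral_nonneg fun z => mul_nonneg (hΓ.2 x z).1 (ih z y).1
    · have := norm_integral_le_of_norm_le_const (μ := μ) (C := 1)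
        (f := fun z => Γ x z * kpowAux μ Γ n z y) (Eventually.of_forall fun z => by
          rw [Real.norm_of_nonneg (mul_nonneg (hΓ.2 x z).1 (ih z y).1)]
          exact mul_le_one₀ (hΓ.2 x z).2 (ih z y).1 (ih z y).2)
      simp only [probReal_univ, mul_one] at this
      exact (le_abs_self _).trans this

theorem kpowAux_integrable (μ : Measure Ω) [IsProbabilityMeasure μ] (Γ : Ω → Ω → ℝ)
    (hΓ : IsDigraphon Γ) (n m : ℕ) (x w : Ω) :
    Integrable (fun y => kpowAux μ Γ n x y * kpowAux μ Γ m y w) μ := by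
  refine Integrable.of_bound (C := 1) ?_ (Eventually.of_forall fun z => ?_)
  · apply Measurable.aestronglyMeasurable
    exact ((kpowAux_meas μ Γ hΓ n).comp measurable_prodMk_left).mul
      ((kpowAux_meas μ Γ hΓ m).comp measurable_prodMk_right)
  · have h1 := kpowAux_mem μ Γ hΓ n x z
    have h2 := kpowAux_mem μ Γ hΓ m z w
    rw [Real.norm_of_nonneg (mul_nonneg h1.1 h2.1)]
    exact mul_le_one₀ h1.2 h2.1 h2.2

theorem kpowAux_add (μ : Measure Ω) [IsProbabilityMeasure μ] (Γ : Ω → Ω → ℝ)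
    (hΓ : IsDigraphon Γ) (n m : ℕ) (x w : Ω) :
    kpowAux μ Γ (n + m + 1) x w = ∫ y, kpowAux μ Γ n x y * kpowAux μ Γ m y w ∂μ := by
  induction n generalizing x w with
  | zero => rw [Nat.zero_add]; rfl
  | succ n ih =>
    have e : n + 1 + m + 1 = (n + m + 1) + 1 := by omega
    rw [e]
    change ∫ z, Γ x z * kpowAux μ Γ (n + m + 1) z w ∂μ
      = ∫ y, (∫ z, Γ x z * kpowAux μ Γ n z y ∂μ) * kpowAux μ Γ m y w ∂μ
    simp_rw [ih, ← integral_const_mul, ← integral_mul_const]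
    rw [integral_integral_swap]
    · simp_rw [mul_assoc]
    · refine Integrable.of_bound (C := 1) ?_ (Eventually.of_forall fun z => ?_)
      · apply Measurable.aestronglyMeasurable
        exact (hΓ.1.comp (measurable_const.prodMk measurable_fst)).mul
          ((kpowAux_meas μ Γ hΓ n).mul
          ((kpowAux_meas μ Γ hΓ m).comp (measurable_snd.prodMk measurable_const)))
      · have h0 := hΓ.2 x z.1
        have h1 := kpowAux_mem μ Γ hΓ n z.1 z.2
        have h2 := kpowAux_mem μ Γ hΓ m z.2 w
        have h3 := mul_nonneg h1.1 h2.1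
        simp only [Function.uncurry]
        rw [Real.norm_of_nonneg (mul_nonneg h0.1 h3)]
        exact mul_le_one₀ h0.2 h3 (mul_le_one₀ h1.2 h2.1 h2.2)

theorem mem_reachOut (μ : Measure Ω) (Γ : Ω → Ω → ℝ) (x y : Ω) :
    y ∈ ReachOut μ Γ x ↔ ∃ n, 0 < kpowAux μ Γ n x y :=
  ⟨fun ⟨k, _, h⟩ => ⟨k - 1, h⟩, fun ⟨n, h⟩ => ⟨n + 1, by omega, h⟩⟩

theorem reach_meas (μ : Measure Ω) [IsProbabilityMeasure μ] (Γ : Ω → Ω → ℝ)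
    (hΓ : IsDigraphon Γ) : MeasurableSet {p : Ω × Ω | p.2 ∈ ReachOut μ Γ p.1} := by
  simp_rw [mem_reachOut, Set.setOf_exists]
  exact MeasurableSet.iUnion fun n =>
    measurableSet_lt measurable_const (kpowAux_meas μ Γ hΓ n)

theorem reach_trans_ae (μ : Measure Ω) [IsProbabilityMeasure μ] (Γ : Ω → Ω → ℝ)
    (hΓ : IsDigraphon Γ) (x w : Ω) :
    ∀ᵐ y ∂μ, y ∈ ReachOut μ Γ x → w ∈ ReachOut μ Γ y → w ∈ ReachOut μ Γ x := by
  by_cases hw : w ∈ ReachOut μ Γ x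
  · exact Eventually.of_forall fun _ _ _ => hw
  have key : ∀ n m : ℕ, ∀ᵐ y ∂μ, kpowAux μ Γ n x y * kpowAux μ Γ m y w = 0 := by
    intro n m
    have h0 : ∫ y, kpowAux μ Γ n x y * kpowAux μ Γ m y w ∂μ = 0 := by
      rw [← kpowAux_add μ Γ hΓ]
      by_contra hne
      exact hw ((mem_reachOut μ Γ x w).2 ⟨_, lt_of_le_of_ne
        (kpowAux_mem μ Γ hΓ (n + m + 1) x w).1 (Ne.symm hne)⟩)
    exact (integral_eq_zero_iff_of_nonneg
      (fun y => mul_nonneg (kpowAux_mem μ Γ hΓ n x y).1 (kpowAux_mem μ Γ hΓ m y w).1)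
      (kpowAux_integrable μ Γ hΓ n m x w)).1 h0
  have key' := ae_all_iff.2 fun n => ae_all_iff.2 (key n)
  filter_upwards [key'] with y hy h1 h2
  obtain ⟨n, hn⟩ := (mem_reachOut μ Γ x y).1 h1
  obtain ⟨m, hm⟩ := (mem_reachOut μ Γ y w).1 h2
  exact absurd (hy n m) (mul_pos hn hm).ne'

/-- Calculus of reachability: if a positive measure of points reachable
from `x` each reach at least measure `c` of `Y`, then so does `x`. -/
theorem calculus_of_reachability
    {Ω : Type*} [MeasurableSpace Ω] (μ : Measure Ω) [IsProbabilityMeasure μ]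
    (Γ : Ω → Ω → ℝ) (hΓ : IsDigraphon Γ)
    (x : Ω) (Y : Set Ω) (hY : MeasurableSet Y)
    (c : ℝ) (hc0 : 0 ≤ c) (hc1 : c < 1)
    (h : 0 < μ {y | y ∈ ReachOut μ Γ x ∧ c < (μ (ReachOut μ Γ y ∩ Y)).toReal}) :
    c < (μ (ReachOut μ Γ x ∩ Y)).toReal := by
  have hM := reach_meas μ Γ hΓ
  have hx : MeasurableSet (ReachOut μ Γ x) := measurable_prodMk_left (x := x) hM
  have hae : ∀ᵐ y ∂μ, ∀ᵐ w ∂μ,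
      y ∈ ReachOut μ Γ x → w ∈ ReachOut μ Γ y → w ∈ ReachOut μ Γ x := by
    have hS : MeasurableSet {p : Ω × Ω |
        p.2 ∈ ReachOut μ Γ x → p.1 ∈ ReachOut μ Γ p.2 → p.1 ∈ ReachOut μ Γ x} := by
      refine MeasurableSet.imp (measurable_snd hx) (MeasurableSet.imp ?_ (measurable_fst hx))
      exact measurable_swap hM
    exact (Measure.ae_ae_comm hS).1
      (Eventually.of_forall fun w => reach_trans_ae μ Γ hΓ x w)
  have hfr : ∃ᵐ y ∂μ, y ∈ ReachOut μ Γ x ∧ c < (μ (ReachOut μ Γ y ∩ Y)).toReal :=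
    frequently_ae_iff.2 h.ne'
  obtain ⟨y, ⟨hy, hcy⟩, hw⟩ := (hfr.and_eventually hae).exists
  refine hcy.trans_le (ENNReal.toReal_mono (measure_ne_top _ _) (measure_mono_ae ?_))
  filter_upwards [hw] with w hw h2
  exact ⟨hw hy h2.1, h2.2⟩

end Digraphon
end

section
/- Let (Ω,μ) be a probability space, let W ∈ L^∞(Ω×Ω) be a (complex-valued) bounded measurable kernel, and let α > ρ(T_W), where T_W is the induced integral operator on L²(Ω,μ). Then there exists C > 0 such that for all k ∈ ℕ, ‖W^k‖_∞ ≤ C·α^k, where W^k denotes the k-fold kernel power and ‖·‖_∞ the essential supremum norm on Ω×Ω. -/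
open MeasureTheory Filter Set Topology
open scoped ENNReal Real

namespace Digraphon

variable {Ω : Type*} [MeasurableSpace Ω]

/-- Operator powers grow at most like `α ^ n` when `α` exceeds the spectral radius. -/
lemma opPow_bound {A : Type*} [NormedRing A] [NormedAlgebra ℂ A] [CompleteSpace A] (T : A)
    (α : ℝ) (hα : (spectralRadius ℂ T).toReal < α) :
    ∃ C : ℝ, 0 ≤ C ∧ ∀ n : ℕ, ‖T ^ n‖ ≤ C * α ^ n := by
  have hα0 : 0 < α := ENNReal.toReal_nonneg.trans_lt hα
  have hfin : spectralRadius ℂ T ≠ ⊤ := by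
    have h := spectrum.spectralRadius_le_pow_nnnorm_pow_one_div ℂ T 0
    refine ne_top_of_le_ne_top ?_ h
    simp [ENNReal.mul_eq_top]
  have hlt : spectralRadius ℂ T < ENNReal.ofReal α :=
    (ENNReal.lt_ofReal_iff_toReal_lt hfin).2 hα
  have hev := (spectrum.pow_norm_pow_one_div_tendsto_nhds_spectralRadius T).eventually_lt_const hlt
  have hb : IsBoundedUnder (· ≤ ·) atTop (fun n : ℕ => ‖T ^ n‖ / α ^ n) := by
    refine ⟨1, ?_⟩
    rw [eventually_map]
    filter_upwards [hev, eventually_ge_atTop 1] with n hn hn1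
    rw [div_le_one (by positivity)]
    have h1 : ‖T ^ n‖ ^ (1 / n : ℝ) < α := (ENNReal.ofReal_lt_ofReal_iff hα0).1 hn
    have h2 : (‖T ^ n‖ ^ (1 / n : ℝ)) ^ n ≤ α ^ n := by gcongr
    rwa [one_div, Real.rpow_inv_natCast_pow (norm_nonneg _) (by omega)] at h2
  obtain ⟨C, hC⟩ := hb.bddAbove_range
  have hC' : ∀ n : ℕ, ‖T ^ n‖ / α ^ n ≤ C := fun n => hC ⟨n, rfl⟩
  refine ⟨C, le_trans (by positivity) (hC' 0), fun n => ?_⟩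
  have := hC' n
  rwa [div_le_iff₀ (by positivity)] at this

lemma kpowAuxC_measurable (μ : Measure Ω) [IsProbabilityMeasure μ]
    (W : Ω → Ω → ℂ) (hW : Measurable (Function.uncurry W)) (n : ℕ) :
    Measurable (Function.uncurry (kpowAuxC μ W n)) := by
  induction n with
  | zero => exact hW
  | succ n ih =>
    have h : Measurable (fun p : (Ω × Ω) × Ω => W p.1.1 p.2 * kpowAuxC μ W n p.2 p.1.2) := by
      have h1 : Measurable (fun p : (Ω × Ω) × Ω => W p.1.1 p.2) :=
        hW.comp (f := fun p : (Ω × Ω) × Ω => (p.1.1, p.2)) (by fun_prop)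
      have h2 : Measurable (fun p : (Ω × Ω) × Ω => kpowAuxC μ W n p.2 p.1.2) :=
        ih.comp (f := fun p : (Ω × Ω) × Ω => (p.2, p.1.2)) (by fun_prop)
      exact h1.mul h2
    exact (h.stronglyMeasurable.integral_prod_right' (ν := μ)).measurable

lemma kpowAuxC_bound (μ : Measure Ω) [IsProbabilityMeasure μ]
    (W : Ω → Ω → ℂ) {M : ℝ} (hM : 0 ≤ M)
    (hrow : ∀ᵐ x ∂μ, ∀ᵐ z ∂μ, ‖W x z‖ ≤ M) (y : Ω) (hy : ∀ᵐ z ∂μ, ‖W z y‖ ≤ M) (n : ℕ) :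
    ∀ᵐ x ∂μ, ‖kpowAuxC μ W n x y‖ ≤ M ^ (n + 1) := by
  induction n with
  | zero => simpa [kpowAuxC] using hy
  | succ n ih =>
    filter_upwards [hrow] with x hx
    have : ∀ᵐ z ∂μ, ‖W x z * kpowAuxC μ W n z y‖ ≤ M ^ (n + 1 + 1) := by
      filter_upwards [hx, ih] with z h1 h2
      rw [norm_mul, pow_succ' M (n + 1)]
      gcongr
    have h := norm_integral_le_of_norm_le_const this
    simpa [kpowAuxC] using h

lemma lp_integrable (μ : Measure Ω) [IsProbabilityMeasure μ] (f : Lp ℂ 2 μ) :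
    Integrable f μ := (Lp.memLp f).integrable (by norm_num)

lemma integral_kpowAuxC (μ : Measure Ω) [IsProbabilityMeasure μ]
    (W : Ω → Ω → ℂ) (hW : Measurable (Function.uncurry W)) {M : ℝ} (hM : 0 ≤ M)
    (hWM : ∀ᵐ p ∂(μ.prod μ), ‖W p.1 p.2‖ ≤ M)
    (T : Lp ℂ 2 μ →L[ℂ] Lp ℂ 2 μ)
    (hT : ∀ f : Lp ℂ 2 μ, ⇑(T f) =ᵐ[μ] fun x => ∫ y, f y * W y x ∂μ)
    (y : Ω) (hy : ∀ᵐ z ∂μ, ‖W z y‖ ≤ M) (n : ℕ) :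
    ∀ f : Lp ℂ 2 μ, ∫ z, f z * kpowAuxC μ W n z y ∂μ = ∫ z, (T ^ n) f z * W z y ∂μ := by
  induction n with
  | zero => intro f; simp [kpowAuxC]
  | succ n ih =>
    intro f
    have hk := kpowAuxC_measurable μ W hW n
    have hky : Measurable (fun w => kpowAuxC μ W n w y) :=
      hk.comp (f := fun w => (w, y)) (by fun_prop)
    have hkb := kpowAuxC_bound μ W hM (Measure.ae_ae_of_ae_prod hWM) y hy n
    have hki : Integrable (fun w => kpowAuxC μ W n w y) μ :=
      Integrable.of_bound hky.aestronglyMeasurable _ hkb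
    have hint : Integrable (Function.uncurry
        (fun z w => f z * (W z w * kpowAuxC μ W n w y))) (μ.prod μ) := by
      have h1 := (lp_integrable μ f).mul_prod hki
      have h2 := h1.bdd_mul hW.aestronglyMeasurable (c := M) hWM
      refine h2.congr (Eventually.of_forall fun p => ?_)
      simp only [Function.uncurry]
      ring
    calc ∫ z, f z * kpowAuxC μ W (n + 1) z y ∂μ
        = ∫ z, ∫ w, f z * (W z w * kpowAuxC μ W n w y) ∂μ ∂μ := by
          simp only [kpowAuxC, integral_const_mul]
      _ = ∫ w, ∫ z, f z * (W z w * kpowAuxC μ W n w y) ∂μ ∂μ := integral_integral_swap hint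
      _ = ∫ w, (∫ z, f z * W z w ∂μ) * kpowAuxC μ W n w y ∂μ := by
          simp only [← mul_assoc, integral_mul_const]
      _ = ∫ w, T f w * kpowAuxC μ W n w y ∂μ := by
          refine integral_congr_ae ?_
          filter_upwards [hT f] with w hw
          rw [hw]
      _ = ∫ w, (T ^ (n + 1)) f w * W w y ∂μ := by
          rw [ih (T f), pow_succ]; rfl

lemma integral_norm_le_lp (μ : Measure Ω) [IsProbabilityMeasure μ] (f : Lp ℂ 2 μ) :
    ∫ z, ‖f z‖ ∂μ ≤ ‖f‖ := by
  rw [integral_norm_eq_lintegral_enorm (Lp.aestronglyMeasurable f), Lp.norm_def,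
    ← eLpNorm_one_eq_lintegral_enorm]
  exact ENNReal.toReal_mono (Lp.eLpNorm_ne_top f)
    (eLpNorm_le_eLpNorm_of_exponent_le (by norm_num) (Lp.aestronglyMeasurable f))

lemma kpowAuxC_le (μ : Measure Ω) [IsProbabilityMeasure μ]
    (W : Ω → Ω → ℂ) (hW : Measurable (Function.uncurry W)) {M : ℝ} (hM : 0 ≤ M)
    (hWM : ∀ᵐ p ∂(μ.prod μ), ‖W p.1 p.2‖ ≤ M)
    (T : Lp ℂ 2 μ →L[ℂ] Lp ℂ 2 μ)
    (hT : ∀ f : Lp ℂ 2 μ, ⇑(T f) =ᵐ[μ] fun x => ∫ y, f y * W y x ∂μ)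
    (x y : Ω) (hx : ∀ᵐ z ∂μ, ‖W x z‖ ≤ M) (hy : ∀ᵐ z ∂μ, ‖W z y‖ ≤ M) (n : ℕ) :
    ‖kpowAuxC μ W (n + 1) x y‖ ≤ ‖T ^ n‖ * M * M := by
  have hxm : Measurable (W x) := hW.comp (f := fun w => (x, w)) (by fun_prop)
  have hg : MemLp (W x) 2 μ := MemLp.of_bound hxm.aestronglyMeasurable M hx
  set g : Lp ℂ 2 μ := hg.toLp (W x) with hgdef
  have hgn : ‖g‖ ≤ M := by
    refine (Lp.norm_le_of_ae_bound hM (f := g) (C := M) ?_).trans (by simp [measureUnivNNReal])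
    filter_upwards [hg.coeFn_toLp, hx] with z h1 h2
    rw [h1]; exact h2
  have h1 : kpowAuxC μ W (n + 1) x y = ∫ z, (T ^ n) g z * W z y ∂μ := by
    rw [← integral_kpowAuxC μ W hW hM hWM T hT y hy n g]
    refine integral_congr_ae ?_
    filter_upwards [hg.coeFn_toLp] with z h1
    rw [h1]
  rw [h1]
  calc ‖∫ z, (T ^ n) g z * W z y ∂μ‖ ≤ ∫ z, ‖(T ^ n) g z‖ * M ∂μ := by
        refine norm_integral_le_of_norm_le ((lp_integrable μ _).norm.mul_const M) ?_
        filter_upwards [hy] with z hz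
        rw [norm_mul]
        gcongr
    _ = (∫ z, ‖(T ^ n) g z‖ ∂μ) * M := integral_mul_const _ _
    _ ≤ ‖T ^ n‖ * M * M := by
        gcongr
        exact (integral_norm_le_lp μ _).trans
          (((T ^ n).le_opNorm g).trans (by gcongr))

/-- If `α` exceeds the spectral radius of the integral operator induced by
a bounded kernel `W`, then `‖W^k‖_∞ = O(α^k)`. -/
theorem kernel_powers_Linfty_growth
    {Ω : Type*} [MeasurableSpace Ω] (μ : Measure Ω) [IsProbabilityMeasure μ]
    (W : Ω → Ω → ℂ) (hWmeas : Measurable (Function.uncurry W))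
    (hWbd : MemLp (Function.uncurry W) ⊤ (μ.prod μ))
    (T : Lp ℂ 2 μ →L[ℂ] Lp ℂ 2 μ)
    (hT : ∀ f : Lp ℂ 2 μ, ⇑(T f) =ᵐ[μ] fun x => ∫ y, f y * W y x ∂μ)
    (α : ℝ) (hα : (spectralRadius ℂ T).toReal < α) :
    ∃ C : ℝ, 0 < C ∧ ∀ k : ℕ, 1 ≤ k →
      (eLpNorm (Function.uncurry (dpowC μ W k)) ⊤ (μ.prod μ)).toReal ≤ C * α ^ k := by
  have hα0 : 0 < α := ENNReal.toReal_nonneg.trans_lt hα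
  obtain ⟨C₀, hC₀, hTn⟩ := opPow_bound T α hα
  obtain ⟨M, hM, hWM⟩ : ∃ M : ℝ, 0 ≤ M ∧ ∀ᵐ p ∂(μ.prod μ), ‖W p.1 p.2‖ ≤ M := by
    refine ⟨(eLpNorm (Function.uncurry W) ⊤ (μ.prod μ)).toReal, ENNReal.toReal_nonneg, ?_⟩
    filter_upwards [ae_le_eLpNormEssSup (f := Function.uncurry W) (μ := μ.prod μ)] with p hp
    have := ENNReal.toReal_mono hWbd.2.ne (by simpa using hp)
    simpa [Function.uncurry] using this
  have hrow : ∀ᵐ x ∂μ, ∀ᵐ z ∂μ, ‖W x z‖ ≤ M := Measure.ae_ae_of_ae_prod hWM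
  have hcol : ∀ᵐ y ∂μ, ∀ᵐ z ∂μ, ‖W z y‖ ≤ M := by
    have h := (Measure.measurePreserving_swap (μ := μ) (ν := μ)).quasiMeasurePreserving.ae hWM
    exact Measure.ae_ae_of_ae_prod h
  have hfst := (Measure.quasiMeasurePreserving_fst (μ := μ) (ν := μ)).ae hrow
  have hsnd := (Measure.quasiMeasurePreserving_snd (μ := μ) (ν := μ)).ae hcol
  have key : ∀ (k : ℕ) (B : ℝ), 0 ≤ B → (∀ᵐ p ∂(μ.prod μ), ‖kpowAuxC μ W k p.1 p.2‖ ≤ B) →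
      (eLpNorm (Function.uncurry (kpowAuxC μ W k)) ⊤ (μ.prod μ)).toReal ≤ B := by
    intro k B hB h
    refine ENNReal.toReal_le_of_le_ofReal hB ?_
    rw [eLpNorm_exponent_top]
    exact eLpNormEssSup_le_of_ae_bound h
  refine ⟨M / α + C₀ * M * M / α ^ 2 + 1, by positivity, fun k hk => ?_⟩
  obtain ⟨n, rfl⟩ : ∃ n, k = n + 1 := ⟨k - 1, by omega⟩
  simp only [dpowC, Nat.add_sub_cancel]
  cases n with
  | zero =>
    refine (key 0 M hM hWM).trans ?_
    have h1 : M = M / α * α ^ (0 + 1) := by rw [zero_add, pow_one]; field_simp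
    calc M = M / α * α ^ (0 + 1) := h1
      _ ≤ _ := by
        gcongr
        have : 0 ≤ C₀ * M * M / α ^ 2 := by positivity
        linarith
  | succ n =>
    refine (key (n + 1) (C₀ * α ^ n * M * M) (by positivity) ?_).trans ?_
    · filter_upwards [hfst, hsnd] with p hp1 hp2
      refine (kpowAuxC_le μ W hWmeas hM hWM T hT p.1 p.2 hp1 hp2 n).trans ?_
      gcongr
      exact hTn n
    · calc C₀ * α ^ n * M * M = C₀ * M * M / α ^ 2 * α ^ (n + 1 + 1) := by field_simp; ring
        _ ≤ _ := by
          gcongr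
          have : 0 ≤ M / α := by positivity
          linarith

end Digraphon
end

section
/- Let Γ be a strongly connected digraphon on a probability space (Ω,μ). Then the induced integral operator T_Γ on L²(Ω,μ) is irreducible: for every measurable set Z ⊆ Ω with 0 < μ(Z) < 1, the closed ideal I_Z = {f ∈ L²(Ω) : f = 0 almost everywhere on Z} is not invariant under T_Γ (i.e., T_Γ I_Z ⊄ I_Z); equivalently, the only ideals I of the Banach lattice L²(Ω) with T_Γ I ⊆ I are {0} and L²(Ω). -/
open MeasureTheory Filter Set Topology
open scoped ENNReal Real

namespace Digraphon

variable {Ω : Type*} [MeasurableSpace Ω]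

/-- A strongly connected digraphon induces an irreducible operator: no
nontrivial closed ideal `I_Z` of the Banach lattice `L²(Ω)` is invariant under `T_Γ`. -/
theorem strongly_connected_implies_irreducible
    {Ω : Type*} [MeasurableSpace Ω] (μ : Measure Ω) [IsProbabilityMeasure μ]
    (Γ : Ω → Ω → ℝ) (hΓ : IsDigraphon Γ)
    (hconn : StronglyConnectedIn μ Γ Set.univ) :
    ∀ Z : Set Ω, MeasurableSet Z → 0 < μ Z → μ Z < 1 →
      ∃ f : Ω → ℂ, MemLp f 2 μ ∧ (∀ᵐ x ∂μ, x ∈ Z → f x = 0) ∧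
        ¬(∀ᵐ x ∂μ, x ∈ Z → (∫ y, f y * (Γ y x : ℂ) ∂μ) = 0) := by
  intro Z hZ h0 h1
  obtain ⟨hm, hb⟩ := hΓ
  have hc : 0 < μ Zᶜ := by
    rw [prob_compl_eq_one_sub hZ]
    exact tsub_pos_of_lt h1
  have hpos := hconn.2.2 Zᶜ Z hZ.compl hZ (by simp) disjoint_compl_left hc h0
  refine ⟨Zᶜ.indicator (fun _ => (1 : ℂ)), ?_, ?_, ?_⟩
  · exact memLp_indicator_const 2 hZ.compl 1 (Or.inr (measure_ne_top _ _))
  · filter_upwards with x hx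
    simp [hx]
  · intro h
    have hint : Integrable (Function.uncurry Γ) ((μ.restrict Zᶜ).prod (μ.restrict Z)) := by
      refine Integrable.of_bound hm.aestronglyMeasurable 1 ?_
      filter_upwards with p
      have := hb p.1 p.2
      simp only [Function.uncurry, Real.norm_eq_abs]
      rw [abs_of_nonneg this.1]
      exact this.2
    rw [integral_integral_swap hint] at hpos
    have hz : ∫ x in Z, ∫ y in Zᶜ, Γ y x ∂μ ∂μ = 0 := by
      rw [← integral_zero Ω ℝ (μ := μ.restrict Z)]
      refine setIntegral_congr_ae hZ ?_
      filter_upwards [h] with x hx hxZ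
      have h2 := hx hxZ
      have h3 : (fun y => Zᶜ.indicator (fun _ => (1 : ℂ)) y * (Γ y x : ℂ))
          = Zᶜ.indicator (fun y => ((Γ y x : ℝ) : ℂ)) := by
        funext y
        by_cases hy : y ∈ Z <;> simp [hy]
      rw [h3, integral_indicator hZ.compl, integral_complex_ofReal] at h2
      exact_mod_cast h2
    exact absurd hz hpos.ne'

end Digraphon
end
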